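/- arXiv:2205.06625 — 2 statements merged into one kernel-verified Lean document; each statement's English description precedes it below -/
import Mathlib

section
/- For t ∈ ℝ, let F_t ∈ ℝ⟦X⟧ be the formal power series whose n-th coefficient, for n ≥ 1, is ∑ |Aut(T)|^{−t} summed over the isomorphism classes of rooted labeled trees on n vertices (with constant coefficient 0), and let c(j,t) = j · ∑_{λ ⊢ j} ((−1)^{ℓ(λ)−1}/ℓ(λ)) · (ℓ(λ)!/∏_m λ_m!) · ∏_m (m!)^{−λ_m·t}. Then for every t ∈ ℝ the functional equation F_t = X · exp(∑_{j≥1} (c(j,t)/j) · F_{jt}(X^j)) holds in ℝ⟦X⟧, where c(1,t) = 1, F_{jt}(X^j) is the power series whose n-th coefficient equals the (n/j)-th coefficient of F_{jt} if j divides n and 0 otherwise, and exp(G) = ∑_{k≥0} G^k/k! for a power series G with zero constant term. (The inner sum over j ≥ 1 is coefficientwise finite, since F_{jt}(X^j) has order at least j.) -/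
open scoped Classical BigOperators

/-- A rooted labeled tree on `n` vertices: a simple graph on `Fin n` that is a
tree, together with a distinguished root vertex. -/
structure RTree (n : ℕ) where
  graph : SimpleGraph (Fin n)
  isTree : graph.IsTree
  root : Fin n

namespace RTree

/-- Two rooted labeled trees are isomorphic if there is a graph isomorphism
mapping root to root. -/
def Isom {n : ℕ} (T₁ T₂ : RTree n) : Prop :=
  ∃ φ : T₁.graph ≃g T₂.graph, φ T₁.root = T₂.root

/-- The out-degree (number of children) of a vertex: its degree if it is the
root and its degree minus one otherwise. -/
noncomputable def outdeg {n : ℕ} (T : RTree n) (v : Fin n) : ℕ :=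
  if v = T.root then (T.graph.neighborSet v).ncard
  else (T.graph.neighborSet v).ncard - 1

/-- The number of root-fixing graph automorphisms. -/
noncomputable def autCard {n : ℕ} (T : RTree n) : ℕ :=
  Nat.card {φ : T.graph ≃g T.graph // φ T.root = T.root}

instance finite {n : ℕ} : Finite (RTree n) := by
  have h : Function.Injective (fun T : RTree n => (T.graph, T.root)) := by
    rintro ⟨g₁, h₁, r₁⟩ ⟨g₂, h₂, r₂⟩ h
    simp_all
  exact Finite.of_injective _ h

noncomputable instance fintype {n : ℕ} : Fintype (RTree n) := Fintype.ofFinite _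

end RTree

/-- The isomorphism classes of rooted labeled trees on `n` vertices (Pólya
trees of size `n`). -/
def Polya (n : ℕ) : Type :=
  Quot (fun T₁ T₂ : RTree n => T₁.Isom T₂)

instance (n : ℕ) : Finite (Polya n) :=
  Finite.of_surjective (Quot.mk _) Quot.exists_rep

noncomputable instance (n : ℕ) : Fintype (Polya n) := Fintype.ofFinite _

/-- The coefficient `c(j,t)` of the Pólya-tree functional equation:
`c(j,t) = j · ∑_{λ ⊢ j} ((−1)^{ℓ(λ)−1}/ℓ(λ)) · (ℓ(λ)!/∏_m λ_m!) · ∏_m (m!)^{−λ_m t}`. -/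
noncomputable def polyaC (j : ℕ) (t : ℝ) : ℝ :=
  j * ∑ P : Nat.Partition j,
    ((-1 : ℝ) ^ (Multiset.card P.parts - 1) / (Multiset.card P.parts : ℝ)) *
      (((Multiset.card P.parts).factorial : ℝ) /
        ∏ m ∈ Finset.range (j + 1), ((P.parts.count m).factorial : ℝ)) *
      ∏ m ∈ Finset.range (j + 1),
        ((m.factorial : ℝ)) ^ (-(P.parts.count m : ℝ) * t)

/-- The exponential `exp(G) = ∑_{k ≥ 0} G^k/k!` of a formal power series;
for `G` with zero constant term only the terms with `k ≤ n` contribute to the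
`n`-th coefficient, so the defining truncated sum is exact. -/
noncomputable def pexp (G : PowerSeries ℝ) : PowerSeries ℝ :=
  PowerSeries.mk fun n =>
    ∑ k ∈ Finset.range (n + 1), PowerSeries.coeff n (G ^ k) / (k.factorial : ℝ)

/-- The series `∑_{j ≥ 1} (c(j,t)/j) · F_{jt}(X^j)`, where `F_{jt}(X^j)` is
the substitution of `X^j` into `F (j·t)`: its `n`-th coefficient is the
`(n/j)`-th coefficient of `F (j·t)` when `j ∣ n` and `0` otherwise.  The sum is
coefficientwise finite since `F_{jt}(X^j)` has order at least `j` (each `F s`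
has zero constant coefficient), so only `1 ≤ j ≤ n` contribute. -/
noncomputable def polyaSum (F : ℝ → PowerSeries ℝ) (t : ℝ) : PowerSeries ℝ :=
  PowerSeries.mk fun n =>
    ∑ j ∈ Finset.Icc 1 n,
      (polyaC j t / (j : ℝ)) *
        (if j ∣ n then PowerSeries.coeff (n / j) (F ((j : ℝ) * t)) else 0)

/-!
A rooted tree with `N + 1` vertices is a root carrying a multiset of branches with `N` vertices in
total. If the branch `q` occurs `m q` times, the automorphism group of the tree is the product over
`q` of the wreath products `Aut q ≀ S_{m q}`, of order `∏ q, (m q)! * |Aut q| ^ m q`. With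
`E_t = ∑ₘ Xᵐ / (m!)ᵗ` this says `F_t = X * ∏ q, E_t(|Aut q|^{-t} X^{|q|})`.

By Faà di Bruno's formula the `j`-th coefficient of `log E_t` is `c(j,t) / j`. Hence the product is
the exponential of `∑ q, ∑ j, (c(j,t) / j) * |Aut q|^{-jt} X^{j|q|}`, and the terms with a given `j`
add up to `(c(j,t) / j) * F_{jt}(X^j)`.
-/

/-! ### Composition, exponential and logarithm of power series -/

section PowerSeries

open PowerSeries

section CommSemiring

variable {R : Type*} [CommSemiring R]

lemma coeff_pow_congr {f g : R⟦X⟧} {n : ℕ} (h : ∀ i ≤ n, coeff i f = coeff i g) (k : ℕ) :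
    coeff n (f ^ k) = coeff n (g ^ k) := by
  rw [coeff_pow, coeff_pow]
  refine Finset.sum_congr rfl fun l hl => Finset.prod_congr rfl fun i hi => h _ ?_
  rw [← (Finset.mem_finsuppAntidiag.1 hl).1]
  exact Finset.single_le_sum (fun _ _ => Nat.zero_le _) hi

lemma multiset_prod_map_monomial (w : ℕ → R) (m : Multiset ℕ) :
    (m.map fun i => monomial i (w i)).prod = monomial m.sum (m.map w).prod := by
  induction m using Multiset.induction_on with
  | empty => simp [monomial_zero_eq_C]
  | cons a m ih => simp [ih, monomial_mul_monomial]

lemma coeff_eq_coeff_sum_monomial {f : R⟦X⟧} (hf : constantCoeff f = 0) {i n : ℕ} (hi : i ≤ n) :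
    coeff i f = coeff i (∑ m ∈ Finset.Icc 1 n, monomial m (coeff m f)) := by
  simp only [map_sum, coeff_monomial, Finset.sum_ite_eq, Finset.mem_Icc]
  rcases i with _ | i
  · simpa using hf
  · simp [hi]

lemma coeff_pow_eq_sum_partition {f : R⟦X⟧} (hf : constantCoeff f = 0) (n d : ℕ) :
    coeff n (f ^ d) = ∑ P : n.Partition with P.parts.card = d,
      P.parts.countPerms * (P.parts.map fun m => coeff m f).prod := by
  rw [coeff_pow_congr (fun i hi => coeff_eq_coeff_sum_monomial hf hi) d, Finset.sum_pow, map_sum]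
  simp only [multiset_prod_map_monomial, ← map_natCast (C (R := R)), coeff_C_mul, coeff_monomial,
    mul_ite, mul_zero]
  rw [← Finset.sum_filter]
  symm
  refine Finset.sum_bij (fun P hP => Sym.mk P.parts (Finset.mem_filter.1 hP).2) ?_ ?_ ?_ ?_
  · intro P _
    simp only [Finset.mem_filter, Finset.mem_sym_iff, Finset.mem_Icc]
    exact ⟨fun m hm => ⟨P.parts_pos hm, P.le_of_mem_parts hm⟩, P.parts_sum.symm⟩
  · intro P _ Q _ h
    exact Nat.Partition.ext (congrArg Sym.toMultiset h)
  · intro m hm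
    simp only [Finset.mem_filter, Finset.mem_sym_iff, Finset.mem_Icc] at hm
    exact ⟨⟨m, fun hi => (hm.1 _ hi).1, hm.2.symm⟩, by simp, rfl⟩
  · intro P _
    rfl

end CommSemiring

section CommRing

variable {R : Type*} [CommRing R]

lemma coeff_pow_eq_zero_of_lt {f : R⟦X⟧} (hf : constantCoeff f = 0) {n k : ℕ} (h : n < k) :
    coeff n (f ^ k) = 0 :=
  X_pow_dvd_iff.1 (pow_dvd_pow_of_dvd (X_dvd_iff.2 hf) k) n h

lemma coeff_subst_eq_sum_range {f : R⟦X⟧} (hf : constantCoeff f = 0) (g : R⟦X⟧) (n : ℕ) :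
    coeff n (g.subst f) = ∑ k ∈ Finset.range (n + 1), coeff k g * coeff n (f ^ k) := by
  rw [coeff_subst' (HasSubst.of_constantCoeff_zero' hf)]
  refine finsum_eq_sum_of_support_subset _ fun k hk => ?_
  rw [Finset.coe_range, Set.mem_Iio]
  by_contra hlt
  exact hk (smul_eq_zero_of_right _ (coeff_pow_eq_zero_of_lt hf (by lia)))

lemma coeff_subst_congr {f₁ f₂ : R⟦X⟧} (hf₁ : constantCoeff f₁ = 0) (g : R⟦X⟧) {n : ℕ}
    (h : ∀ i ≤ n, coeff i f₁ = coeff i f₂) :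
    coeff n (g.subst f₁) = coeff n (g.subst f₂) := by
  have hf₂ : constantCoeff f₂ = 0 := by simpa [hf₁, eq_comm] using h 0 (Nat.zero_le n)
  simp only [coeff_subst_eq_sum_range hf₁, coeff_subst_eq_sum_range hf₂, coeff_pow_congr h]

lemma card_parts_le {n : ℕ} (P : n.Partition) : P.parts.card ≤ n := by
  have h : P.parts.card • 1 ≤ P.parts.sum :=
    Multiset.card_nsmul_le_sum fun _ hi => P.parts_pos hi
  simpa [P.parts_sum] using h

/-- Faà di Bruno's formula. -/
lemma coeff_subst_eq_sum_partition {f : R⟦X⟧} (hf : constantCoeff f = 0) (g : R⟦X⟧) (n : ℕ) :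
    coeff n (g.subst f) = ∑ P : n.Partition,
      coeff P.parts.card g * (P.parts.countPerms * (P.parts.map fun m => coeff m f).prod) := by
  have hmaps : ∀ P ∈ (Finset.univ : Finset n.Partition),
      P.parts.card ∈ Finset.range (n + 1) :=
    fun P _ => Finset.mem_range.2 (Nat.lt_succ_of_le (card_parts_le P))
  rw [coeff_subst_eq_sum_range hf, ← Finset.sum_fiberwise_of_maps_to hmaps]
  refine Finset.sum_congr rfl fun d _ => ?_
  rw [coeff_pow_eq_sum_partition hf, Finset.mul_sum]
  refine Finset.sum_congr rfl fun P hP => ?_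
  rw [(Finset.mem_filter.1 hP).2]

lemma coeff_subst_monomial {s : ℕ} (hs : s ≠ 0) (a : R) (f : R⟦X⟧) (n : ℕ) :
    coeff n (f.subst (monomial s a)) = if s ∣ n then a ^ (n / s) * coeff (n / s) f else 0 := by
  rw [coeff_subst' (HasSubst.monomial' hs a)]
  simp only [monomial_pow, coeff_monomial, smul_eq_mul, mul_ite, mul_zero]
  split_ifs with h
  · rw [finsum_eq_single _ (n / s), if_pos (Nat.div_mul_cancel h).symm, mul_comm]
    rintro k hk
    exact if_neg fun hn => hk (Nat.div_eq_of_eq_mul_left (Nat.pos_of_ne_zero hs) hn).symm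
  · exact finsum_eq_zero_of_forall_eq_zero fun k =>
      if_neg fun hn : n = k * s => h ⟨k, hn.trans (mul_comm k s)⟩

lemma coeff_prod_subst_monomial {Q : Type*} [Fintype Q] {s : Q → ℕ} (hs : ∀ q, s q ≠ 0)
    (a : Q → R) (f : R⟦X⟧) (n : ℕ) [Fintype {m : Q → ℕ // ∑ q, m q * s q = n}] :
    coeff n (∏ q, f.subst (monomial (s q) (a q))) =
      ∑ m : {m : Q → ℕ // ∑ q, m q * s q = n}, ∏ q, a q ^ m.1 q * coeff (m.1 q) f := by
  rw [coeff_prod]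
  symm
  refine Finset.sum_bij_ne_zero
    (fun m _ _ => Finsupp.equivFunOnFinite.symm fun q => m.1 q * s q) ?_ ?_ ?_ ?_
  · intro m _ _
    simp [Finset.mem_finsuppAntidiag, m.2]
  · intro m _ _ m' _ _ h
    have hmul := congrFun (Finsupp.equivFunOnFinite.symm.injective h)
    exact Subtype.ext (funext fun q => Nat.eq_of_mul_eq_mul_right (Nat.pos_of_ne_zero (hs q))
      (hmul q))
  · intro l hl hne
    have hdvd : ∀ q, s q ∣ l q := fun q => by
      by_contra hq
      refine hne (Finset.prod_eq_zero (Finset.mem_univ q) ?_)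
      rw [coeff_subst_monomial (hs q), if_neg hq]
    have hdiv : ∀ q, l q / s q * s q = l q := fun q => Nat.div_mul_cancel (hdvd q)
    refine ⟨⟨fun q => l q / s q, ?_⟩, Finset.mem_univ _, ?_, ?_⟩
    · simp only [hdiv]
      exact (Finset.mem_finsuppAntidiag.1 hl).1
    · simpa only [coeff_subst_monomial (hs _), if_pos (hdvd _)] using hne
    · ext q
      exact hdiv q
  · intro m _ _
    refine Finset.prod_congr rfl fun q _ => ?_
    simp [coeff_subst_monomial (hs q), Nat.mul_div_cancel _ (Nat.pos_of_ne_zero (hs q))]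

lemma eq_of_derivative_eq_mul [IsAddTorsionFree R] {f g h : R⟦X⟧}
    (hfg : constantCoeff f = constantCoeff g) (hf : d⁄dX R f = f * h) (hg : d⁄dX R g = g * h) :
    f = g := by
  ext n
  induction n using Nat.strong_induction_on with
  | _ n ih =>
    rcases n with _ | n
    · simpa using hfg
    have hcoeff : coeff n (d⁄dX R f) = coeff n (d⁄dX R g) := by
      rw [hf, hg, coeff_mul, coeff_mul]
      refine Finset.sum_congr rfl fun p hp => ?_
      rw [ih p.1 (by have := Finset.HasAntidiagonal.mem_antidiagonal.1 hp; lia)]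
    rw [coeff_derivative, coeff_derivative, ← Nat.cast_succ, mul_comm, ← nsmul_eq_mul, mul_comm,
      ← nsmul_eq_mul] at hcoeff
    exact nsmul_right_injective (Nat.succ_ne_zero n) hcoeff

end CommRing

section Exp

variable {A : Type*} [CommRing A] [Algebra ℚ A]

lemma constantCoeff_exp_subst {G : A⟦X⟧} (hG : constantCoeff G = 0) :
    constantCoeff ((exp A).subst G) = 1 := by
  simpa using coeff_subst_eq_sum_range hG (exp A) 0

lemma derivative_exp_subst {G : A⟦X⟧} (hG : constantCoeff G = 0) :
    d⁄dX A ((exp A).subst G) = (exp A).subst G * d⁄dX A G := by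
  rw [derivative_subst (HasSubst.of_constantCoeff_zero' hG), derivative_exp]

lemma exp_subst_add {G H : A⟦X⟧} (hG : constantCoeff G = 0) (hH : constantCoeff H = 0) :
    (exp A).subst (G + H) = (exp A).subst G * (exp A).subst H := by
  have hGH : constantCoeff (G + H) = 0 := by rw [map_add, hG, hH, add_zero]
  have : IsAddTorsionFree A := .of_module_rat A
  refine eq_of_derivative_eq_mul ?_ (derivative_exp_subst hGH) ?_
  · simp [constantCoeff_exp_subst, hG, hH, hGH]
  · rw [Derivation.leibniz, derivative_exp_subst hG, derivative_exp_subst hH, map_add]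
    simp only [smul_eq_mul]
    ring

lemma exp_subst_sum {ι : Type*} (s : Finset ι) {G : ι → A⟦X⟧}
    (hG : ∀ i, constantCoeff (G i) = 0) :
    (exp A).subst (∑ i ∈ s, G i) = ∏ i ∈ s, (exp A).subst (G i) := by
  induction s using Finset.induction_on with
  | empty =>
    ext n
    simp [coeff_subst_eq_sum_range (map_zero _), coeff_one, zero_pow_eq, apply_ite (coeff n)]
  | insert i s hi ih =>
    have hsum : constantCoeff (∑ i ∈ s, G i) = 0 := by
      rw [map_sum, Finset.sum_eq_zero fun i _ => hG i]
    rw [Finset.sum_insert hi, Finset.prod_insert hi, exp_subst_add (hG i) hsum, ih]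

lemma derivative_log_mul_one_add_X : d⁄dX A (log A) * (1 + X) = 1 := by
  rw [deriv_log, mul_add, mul_one]
  ext n
  rcases n with _ | n
  · simp
  · simp [coeff_succ_mul_X, coeff_one, pow_succ]

lemma derivative_logOf_mul {f : A⟦X⟧} (hf : constantCoeff f = 1) :
    f * d⁄dX A (logOf f) = d⁄dX A f := by
  have hsubst : HasSubst (f - 1) := HasSubst.of_constantCoeff_zero' (by simp [hf])
  have hinv : (d⁄dX A (log A)).subst (f - 1) * f = 1 := by
    have h := congrArg (substAlgHom hsubst) (derivative_log_mul_one_add_X (A := A))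
    rw [map_mul, map_add, map_one, substAlgHom_X, coe_substAlgHom, add_sub_cancel] at h
    exact h
  rw [logOf_eq, derivative_subst hsubst, map_sub, derivative_one, sub_zero]
  linear_combination d⁄dX A f * hinv

lemma exp_subst_logOf {f : A⟦X⟧} (hf : constantCoeff f = 1) :
    (exp A).subst (logOf f) = f := by
  have hlog := constantCoeff_logOf hf
  have : IsAddTorsionFree A := .of_module_rat A
  exact eq_of_derivative_eq_mul ((constantCoeff_exp_subst hlog).trans hf.symm)
    (derivative_exp_subst hlog) (derivative_logOf_mul hf).symm

lemma exp_subst_sum_logOf_subst {ι : Type*} (s : Finset ι) {f : A⟦X⟧} (hf : constantCoeff f = 1)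
    {u : ι → A⟦X⟧} (hu : ∀ i, constantCoeff (u i) = 0) :
    (exp A).subst (∑ i ∈ s, (logOf f).subst (u i)) = ∏ i ∈ s, f.subst (u i) := by
  have hlog := constantCoeff_logOf hf
  rw [exp_subst_sum s fun i => constantCoeff_subst_eq_zero (hu i) _ hlog]
  refine Finset.prod_congr rfl fun i _ => ?_
  rw [← subst_comp_subst_apply (HasSubst.of_constantCoeff_zero' hlog)
    (HasSubst.of_constantCoeff_zero' (hu i)), exp_subst_logOf hf]

end Exp

lemma pexp_eq_exp_subst {G : ℝ⟦X⟧} (hG : constantCoeff G = 0) : pexp G = (exp ℝ).subst G := by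
  ext n
  rw [pexp, coeff_mk, coeff_subst_eq_sum_range hG]
  refine Finset.sum_congr rfl fun k _ => ?_
  rw [coeff_exp, div_eq_inv_mul]
  simp

end PowerSeries

/-! ### The logarithm of the Le Roy series -/

section LeRoy

open PowerSeries
open scoped Nat

/-- The Le Roy series `∑ₘ Xᵐ / (m!)ᵗ`: a multiset of `m` copies of one branch contributes a factor
`m!` to the automorphism count. -/
noncomputable def leRoySeries (t : ℝ) : ℝ⟦X⟧ :=
  mk fun m => (m ! : ℝ) ^ (-t)

lemma constantCoeff_leRoySeries (t : ℝ) : constantCoeff (leRoySeries t) = 1 := by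
  simp [leRoySeries, ← coeff_zero_eq_constantCoeff_apply]

lemma cast_countPerms_eq_div {α K : Type*} [DecidableEq α] [Field K] [CharZero K]
    {m : Multiset α} {s : Finset α} (hs : m.toFinset ⊆ s) :
    (m.countPerms : K) = m.card ! / ∏ x ∈ s, ((m.count x)! : K) := by
  have hsupport : m.toFinsupp.support ⊆ s := by rwa [Multiset.toFinsupp_support]
  have hcard : ∑ x ∈ s, m.count x = m.card :=
    Multiset.sum_count_eq_card fun x hx => hs (Multiset.mem_toFinset.2 hx)
  rw [Multiset.countPerms, Finsupp.multinomial_eq_of_support_subset hsupport, Nat.multinomial,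
    Nat.cast_div (Nat.prod_factorial_dvd_factorial_sum _ _)
      (Nat.cast_ne_zero.2 (Nat.prod_factorial_pos _ _).ne')]
  simp only [Multiset.toFinsupp_apply, hcard, Nat.cast_prod]

lemma prod_map_rpow_eq_prod_count {α : Type*} [DecidableEq α] {w : α → ℝ} (hw : ∀ x, 0 ≤ w x)
    (t : ℝ) {m : Multiset α} {s : Finset α} (hs : m.toFinset ⊆ s) :
    (m.map fun x => w x ^ (-t)).prod = ∏ x ∈ s, w x ^ (-(m.count x : ℝ) * t) := by
  rw [Finset.prod_multiset_map_count]
  refine Finset.prod_subset_one_on_sdiff hs (fun x hx => ?_) fun x _ => ?_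
  · have hcount : m.count x = 0 :=
      Multiset.count_eq_zero.2 (mt Multiset.mem_toFinset.2 (Finset.mem_sdiff.1 hx).2)
    simp [hcount]
  · rw [← Real.rpow_mul_natCast (hw x)]
    ring_nf

lemma coeff_logOf_leRoySeries (t : ℝ) {j : ℕ} (hj : j ≠ 0) :
    coeff j (logOf (leRoySeries t)) = polyaC j t / j := by
  rw [logOf_eq, coeff_subst_eq_sum_partition (by simp [constantCoeff_leRoySeries]), polyaC,
    mul_div_cancel_left₀ _ (Nat.cast_ne_zero.2 hj)]
  refine Finset.sum_congr rfl fun P _ => ?_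
  have hparts : P.parts.toFinset ⊆ Finset.range (j + 1) := fun m hm =>
    Finset.mem_range_succ_iff.2 (P.le_of_mem_parts (Multiset.mem_toFinset.1 hm))
  have hcard : P.parts.card ≠ 0 := fun h => hj <| by
    rw [← P.parts_sum, Multiset.card_eq_zero.1 h, Multiset.sum_zero]
  have hcoeff : P.parts.map (fun m => coeff m (leRoySeries t - 1)) =
      P.parts.map fun m => (m ! : ℝ) ^ (-t) :=
    Multiset.map_congr rfl fun m hm => by simp [leRoySeries, coeff_one, (P.parts_pos hm).ne']
  have hlog : coeff P.parts.card (log ℝ) = (-1) ^ (P.parts.card - 1) / (P.parts.card : ℝ) := by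
    obtain ⟨k, hk⟩ := Nat.exists_eq_succ_of_ne_zero hcard
    simp [coeff_log, hk, pow_succ]
  rw [hlog, hcoeff, cast_countPerms_eq_div hparts,
    prod_map_rpow_eq_prod_count (fun m => Nat.cast_nonneg m !) t hparts, mul_assoc]

end LeRoy

section MultisetSeries

open PowerSeries

variable {Q : Type*} [Fintype Q] {s : Q → ℕ} {w : Q → ℝ} {F : ℝ → ℝ⟦X⟧} {N : ℕ}

lemma sum_Icc_ite_dvd_ite_div_eq {M : Type*} [AddCommMonoid M] {n : ℕ} (hn : n ≠ 0) (k : ℕ)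
    (f : ℕ → M) :
    (∑ j ∈ Finset.Icc 1 n, if j ∣ n then if k = n / j then f j else 0 else 0) =
      if k ∣ n then f (n / k) else 0 := by
  simp only [← ite_and]
  split_ifs with hk
  · have hdiv : n / (n / k) = k := Nat.div_div_self hk hn
    rw [Finset.sum_eq_single (n / k)]
    · exact if_pos ⟨Nat.div_dvd_of_dvd hk, hdiv.symm⟩
    · rintro j _ hj
      refine if_neg fun h => hj ?_
      rw [h.2, Nat.div_div_self h.1 hn]
    · have hpos : 0 < n / k := Nat.div_pos (Nat.le_of_dvd (Nat.pos_of_ne_zero hn) hk)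
        (Nat.pos_of_dvd_of_pos hk (Nat.pos_of_ne_zero hn))
      exact fun h => absurd (Finset.mem_Icc.2 ⟨hpos, Nat.div_le_self n k⟩) h
  · exact Finset.sum_eq_zero fun j _ => if_neg <| by
      rintro ⟨hj, rfl⟩
      exact hk (Nat.div_dvd_of_dvd hj)

lemma coeff_polyaSum (hs : ∀ q, s q ≠ 0) (hw : ∀ q, 0 ≤ w q)
    (hF : ∀ t, ∀ n ≤ N, coeff n (F t) = ∑ q with s q = n, w q ^ (-t)) (t : ℝ) {n : ℕ}
    (hn : n ≤ N) :
    coeff n (polyaSum F t) =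
      coeff n (∑ q, (logOf (leRoySeries t)).subst (monomial (s q) (w q ^ (-t)))) := by
  rcases eq_or_ne n 0 with rfl | hn0
  · simp [polyaSum, coeff_subst_monomial (hs _), coeff_zero_eq_constantCoeff_apply,
      constantCoeff_logOf (constantCoeff_leRoySeries t)]
  have hterm j : (polyaC j t / j * if j ∣ n then coeff (n / j) (F (j * t)) else 0) =
      ∑ q, if j ∣ n then if s q = n / j then polyaC j t / j * w q ^ (-(j * t)) else 0 else 0 := by
    rw [hF _ _ ((Nat.div_le_self n j).trans hn), Finset.sum_filter]
    split_ifs <;> simp [Finset.mul_sum]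
  rw [polyaSum, coeff_mk, Finset.sum_congr rfl fun j _ => hterm j, Finset.sum_comm, map_sum]
  refine Finset.sum_congr rfl fun q _ => ?_
  rw [sum_Icc_ite_dvd_ite_div_eq hn0, coeff_subst_monomial (hs q)]
  refine if_ctx_congr Iff.rfl (fun hdvd => ?_) fun _ => rfl
  have hdiv : n / s q ≠ 0 := (Nat.div_ne_zero_iff_of_dvd hdvd).2 ⟨hn0, hs q⟩
  rw [coeff_logOf_leRoySeries t hdiv, ← Real.rpow_mul_natCast (hw q), mul_comm, neg_mul,
    mul_comm t]

lemma prod_factorial_mul_pow_rpow (hw : ∀ q, 0 ≤ w q) (t : ℝ) (m : Q → ℕ) :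
    (∏ q, (m q).factorial * w q ^ m q) ^ (-t) =
      ∏ q, (w q ^ (-t)) ^ m q * coeff (m q) (leRoySeries t) := by
  rw [← Real.finsetProd_rpow _ _ fun q _ =>
    mul_nonneg (Nat.cast_nonneg _) (pow_nonneg (hw q) _)]
  refine Finset.prod_congr rfl fun q _ => ?_
  rw [Real.mul_rpow (Nat.cast_nonneg _) (pow_nonneg (hw q) _), leRoySeries, coeff_mk, mul_comm,
    Real.rpow_pow_comm (hw q)]

lemma coeff_pexp_polyaSum (hs : ∀ q, s q ≠ 0) (hw : ∀ q, 0 ≤ w q)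
    (hF : ∀ t, ∀ n ≤ N, coeff n (F t) = ∑ q with s q = n, w q ^ (-t)) (t : ℝ)
    [Fintype {m : Q → ℕ // ∑ q, m q * s q = N}] :
    coeff N (pexp (polyaSum F t)) =
      ∑ m : {m : Q → ℕ // ∑ q, m q * s q = N}, (∏ q, (m.1 q).factorial * w q ^ m.1 q) ^ (-t) := by
  have hconst : constantCoeff (polyaSum F t) = 0 := by
    simp [polyaSum, ← coeff_zero_eq_constantCoeff_apply, -coeff_zero_eq_constantCoeff]
  have hmonomial q : constantCoeff (monomial (s q) (w q ^ (-t))) = 0 := by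
    rw [← coeff_zero_eq_constantCoeff_apply, coeff_monomial, if_neg (hs q).symm]
  rw [pexp_eq_exp_subst hconst,
    coeff_subst_congr hconst _ fun n hn => coeff_polyaSum hs hw hF t hn,
    exp_subst_sum_logOf_subst _ (constantCoeff_leRoySeries t) hmonomial,
    coeff_prod_subst_monomial hs]
  exact Finset.sum_congr rfl fun m _ => (prod_factorial_mul_pow_rpow hw t m.1).symm

end MultisetSeries

/-! ### Grafting rooted graphs -/

section RootedIso

/-- Isomorphisms from the graph `G` rooted at `r` to the graph `H` rooted at `s`. -/
abbrev RootedIso {V W : Type*} (G : SimpleGraph V) (r : V) (H : SimpleGraph W) (s : W) :=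
  {φ : G ≃g H // φ r = s}

namespace RootedIso

variable {V W U : Type*} {G : SimpleGraph V} {r : V} {H : SimpleGraph W} {s : W}
  {K : SimpleGraph U} {t : U}

lemma apply_eq_root_iff (φ : RootedIso G r H s) {a : V} : φ.1 a = s ↔ a = r := by
  rw [← φ.1.injective.eq_iff (a := a), φ.2]

lemma ext {φ ψ : RootedIso G r H s} (h : ∀ a, φ.1 a = ψ.1 a) : φ = ψ :=
  Subtype.ext (RelIso.ext h)

/-- The inverse of a root-preserving isomorphism. -/
def symm (φ : RootedIso G r H s) : RootedIso H s G r :=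
  ⟨φ.1.symm, φ.1.symm_apply_eq.2 φ.2.symm⟩

/-- The composition of root-preserving isomorphisms. -/
def trans (φ : RootedIso G r H s) (ψ : RootedIso H s K t) : RootedIso G r K t :=
  ⟨φ.1.trans ψ.1, by rw [RelIso.trans_apply, φ.2, ψ.2]⟩

instance [Finite V] [Finite W] : Finite (RootedIso G r H s) :=
  Finite.of_injective (fun φ => (φ.1 : V → W)) fun _ _ h => ext (congrFun h)

lemma natCard_aut_eq (φ : RootedIso G r H s) :
    Nat.card (RootedIso G r G r) = Nat.card (RootedIso H s H s) :=
  Nat.card_congr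
    { toFun := fun ψ => (φ.symm.trans ψ).trans φ
      invFun := fun ψ => (φ.trans ψ).trans φ.symm
      left_inv := fun ψ => ext fun a => by simp [trans, symm]
      right_inv := fun ψ => ext fun a => by simp [trans, symm] }

end RootedIso

end RootedIso

section Graft

variable {ι : Type*} {V : ι → Type*}

/-- Adjacency in the graft of a family of rooted graphs; `none` is the new root. -/
inductive GraftAdj (G : ∀ i, SimpleGraph (V i)) (r : ∀ i, V i) :
    Option (Σ i, V i) → Option (Σ i, V i) → Prop
  | none_root (i : ι) : GraftAdj G r none (some ⟨i, r i⟩)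
  | root_none (i : ι) : GraftAdj G r (some ⟨i, r i⟩) none
  | branch {i : ι} {a b : V i} (h : (G i).Adj a b) : GraftAdj G r (some ⟨i, a⟩) (some ⟨i, b⟩)

/-- The graft of the rooted graphs `(G i, r i)`: their disjoint union together with a new vertex
`none`, the root of the graft, which is joined to every `r i`. -/
def graft (G : ∀ i, SimpleGraph (V i)) (r : ∀ i, V i) : SimpleGraph (Option (Σ i, V i)) where
  Adj := GraftAdj G r
  symm := ⟨by
    rintro _ _ (i | i | h)
    exacts [.root_none i, .none_root i, .branch h.symm]⟩
  loopless := ⟨by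
    rintro (_ | ⟨i, a⟩) h
    · cases h
    · cases h with | branch h => exact h.ne rfl⟩

section Tree

variable {G : ∀ i, SimpleGraph (V i)} {r : ∀ i, V i}

lemma graft_adj_none_some {i : ι} {a : V i} :
    (graft G r).Adj none (some ⟨i, a⟩) ↔ a = r i :=
  ⟨by rintro ⟨⟩; rfl, by rintro rfl; exact .none_root i⟩

lemma graft_adj_some_none {i : ι} {a : V i} :
    (graft G r).Adj (some ⟨i, a⟩) none ↔ a = r i := by
  rw [SimpleGraph.adj_comm, graft_adj_none_some]

lemma graft_adj_some_some {i : ι} {a b : V i} :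
    (graft G r).Adj (some ⟨i, a⟩) (some ⟨i, b⟩) ↔ (G i).Adj a b :=
  ⟨by rintro (_ | _ | h); exact h, .branch⟩

lemma index_eq_of_graft_adj {i j : ι} {a : V i} {b : V j}
    (h : (graft G r).Adj (some ⟨i, a⟩) (some ⟨j, b⟩)) : i = j := by
  cases h
  rfl

lemma graft_connected (hG : ∀ i, (G i).Connected) : (graft G r).Connected := by
  suffices h : ∀ x, (graft G r).Reachable none x from ⟨fun x y => (h x).symm.trans (h y)⟩
  rintro (_ | ⟨i, a⟩)
  · rfl
  · have hroot : (graft G r).Reachable none (some ⟨i, r i⟩) :=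
      (graft_adj_none_some.2 rfl).reachable
    let inclusion : G i →g graft G r := ⟨fun a => some ⟨i, a⟩, .branch⟩
    exact hroot.trans (((hG i).preconnected (r i) a).map inclusion)

lemma edgeSet_graft_subset :
    (graft G r).edgeSet ⊆ (⋃ i, Sym2.map (fun a => some ⟨i, a⟩) '' (G i).edgeSet) ∪
      Set.range fun i => s(none, some ⟨i, r i⟩) := by
  intro e he
  induction e using Sym2.ind with
  | h x y =>
    rcases he with i | i | h
    · exact .inr ⟨i, rfl⟩
    · exact .inr ⟨i, Sym2.eq_swap⟩
    · exact .inl (Set.mem_iUnion.2 ⟨_, s(_, _), h, rfl⟩)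

lemma natCard_edgeSet_graft_le [Fintype ι] [∀ i, Finite (V i)] :
    Nat.card (graft G r).edgeSet ≤ ∑ i, Nat.card (G i).edgeSet + Nat.card ι := by
  simp only [Nat.card_coe_set_eq]
  refine (Set.ncard_le_ncard edgeSet_graft_subset (Set.toFinite _)).trans ?_
  refine (Set.ncard_union_le _ _).trans (add_le_add ?_ ?_)
  · exact (Set.ncard_iUnion_le_of_fintype _).trans
      (Finset.sum_le_sum fun i _ => Set.ncard_image_le (Set.toFinite _))
  · rw [← Set.image_univ, ← Set.ncard_univ]
    exact Set.ncard_image_le (Set.toFinite _)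

lemma graft_isTree [Finite ι] [∀ i, Finite (V i)] (hG : ∀ i, (G i).IsTree) :
    (graft G r).IsTree := by
  have := Fintype.ofFinite ι
  have hconn : (graft G r).Connected := graft_connected fun i => (hG i).connected
  have hcard : Nat.card (Option (Σ i, V i)) =
      ∑ i, Nat.card (G i).edgeSet + Nat.card ι + 1 := by
    have hcardG i := (SimpleGraph.isTree_iff_connected_and_card.1 (hG i)).2
    simp [Finite.card_option, Nat.card_sigma, ← hcardG, Finset.sum_add_distrib]
  refine SimpleGraph.isTree_iff_connected_and_card.2
    ⟨hconn, le_antisymm ?_ hconn.card_vert_le_card_edgeSet_add_one⟩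
  rw [hcard]
  exact Nat.succ_le_succ natCard_edgeSet_graft_le

end Tree

section Iso

variable {ι' : Type*} {V' : ι' → Type*} {G : ∀ i, SimpleGraph (V i)} {r : ∀ i, V i}
  {G' : ∀ i, SimpleGraph (V' i)} {r' : ∀ i, V' i}

/-- The isomorphism of grafts given by a bijection `σ` of the branches and an isomorphism of each
branch `i` onto the branch `σ i`. -/
def graftIso (x : Σ σ : ι ≃ ι', ∀ i, RootedIso (G i) (r i) (G' (σ i)) (r' (σ i))) :
    RootedIso (graft G r) none (graft G' r') none :=
  ⟨{ toEquiv := Equiv.optionCongr (Equiv.sigmaCongr x.1 fun i => (x.2 i).1.toEquiv)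
     map_rel_iff' := by
      rintro (_ | ⟨i, a⟩) (_ | ⟨j, b⟩)
      · simp
      · exact graft_adj_none_some.trans
          ((x.2 j).apply_eq_root_iff.trans graft_adj_none_some.symm)
      · exact graft_adj_some_none.trans
          ((x.2 i).apply_eq_root_iff.trans graft_adj_some_none.symm)
      · by_cases hij : i = j
        · subst hij
          exact graft_adj_some_some.trans ((x.2 i).1.map_adj_iff.trans graft_adj_some_some.symm)
        · exact iff_of_false (fun h => hij (x.1.injective (index_eq_of_graft_adj h)))
            fun h => hij (index_eq_of_graft_adj h) },
    rfl⟩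

lemma graftIso_injective :
    Function.Injective (graftIso (G := G) (r := r) (G' := G') (r' := r')) := by
  rintro ⟨σ, φ⟩ ⟨τ, ψ⟩ h
  have happly i (a : V i) : (⟨σ i, (φ i).1 a⟩ : Σ i, V' i) = ⟨τ i, (ψ i).1 a⟩ :=
    Option.some.inj (congrArg (fun x => x.1 (some ⟨i, a⟩)) h)
  obtain rfl : σ = τ := Equiv.ext fun i => congrArg Sigma.fst (happly i (r i))
  have hφψ : φ = ψ := funext fun i => RootedIso.ext fun a => eq_of_heq (Sigma.mk.inj (happly i a)).2
  rw [hφψ]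

namespace RootedIso

lemma exists_apply_some_eq_some (ψ : RootedIso (graft G r) none (graft G' r') none)
    (p : Σ i, V i) : ∃ q, ψ.1 (some p) = some q :=
  Option.ne_none_iff_exists'.1 fun h => Option.some_ne_none p (ψ.apply_eq_root_iff.1 h)

/-- Removing the roots leaves the branches as connected components, which `ψ` must permute. -/
lemma exists_index_apply (hG : ∀ i, (G i).Connected)
    (ψ : RootedIso (graft G r) none (graft G' r') none) (i : ι) :
    ∃ i', ∀ a : V i, ∃ b, ψ.1 (some ⟨i, a⟩) = some ⟨i', b⟩ := by
  obtain ⟨⟨i', b₀⟩, hb₀⟩ := ψ.exists_apply_some_eq_some ⟨i, r i⟩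
  refine ⟨i', fun a => ?_⟩
  have hreach := (SimpleGraph.reachable_iff_reflTransGen _ _).1 ((hG i).preconnected (r i) a)
  induction hreach with
  | refl => exact ⟨b₀, hb₀⟩
  | @tail c d _ hcd ih =>
    obtain ⟨b, hb⟩ := ih
    obtain ⟨⟨j, e⟩, he⟩ := ψ.exists_apply_some_eq_some ⟨i, d⟩
    have hadj := ψ.1.map_adj_iff.2 (graft_adj_some_some (G := G) (r := r).2 hcd)
    rw [hb, he] at hadj
    obtain rfl := index_eq_of_graft_adj hadj
    exact ⟨e, he⟩

lemma exists_index_equiv (hG : ∀ i, (G i).Connected) (hG' : ∀ i, (G' i).Connected)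
    (ψ : RootedIso (graft G r) none (graft G' r') none) :
    ∃ σ : ι ≃ ι', ∀ i (a : V i), ∃ b, ψ.1 (some ⟨i, a⟩) = some ⟨σ i, b⟩ := by
  choose σ f hf using ψ.exists_index_apply hG
  choose τ g hg using ψ.symm.exists_index_apply hG'
  refine ⟨⟨σ, τ, fun i => ?_, fun i' => ?_⟩, fun i a => ⟨f i a, hf i a⟩⟩
  · have h := ψ.1.symm_apply_apply (some ⟨i, r i⟩)
    rw [hf] at h
    exact congrArg Sigma.fst (Option.some.inj ((hg _ _).symm.trans h))
  · have h := ψ.1.apply_symm_apply (some ⟨i', r' i'⟩)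
    rw [show ψ.1.symm _ = _ from hg i' (r' i'), hf] at h
    exact congrArg Sigma.fst (Option.some.inj h)

end RootedIso

lemma graftIso_surjective (hG : ∀ i, (G i).Connected) (hG' : ∀ i, (G' i).Connected) :
    Function.Surjective (graftIso (G := G) (r := r) (G' := G') (r' := r')) := by
  intro ψ
  obtain ⟨σ, hσ⟩ := ψ.exists_index_equiv hG hG'
  choose f hf using hσ
  have hbij i : Function.Bijective (f i) := by
    refine ⟨fun a b hab => ?_, fun b => ?_⟩
    · have h : ψ.1 (some ⟨i, a⟩) = ψ.1 (some ⟨i, b⟩) := by rw [hf, hf, hab]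
      simpa using ψ.1.injective h
    · obtain ⟨⟨j, a⟩, ha⟩ := ψ.symm.exists_apply_some_eq_some ⟨σ i, b⟩
      have h : (some ⟨σ j, f j a⟩ : Option (Σ i, V' i)) = some ⟨σ i, b⟩ := by
        rw [← hf, ← ha]
        exact ψ.1.apply_symm_apply _
      obtain rfl : j = i := σ.injective (congrArg Sigma.fst (Option.some.inj h))
      exact ⟨a, by simpa using h⟩
  have hadj i {a b : V i} : (G' (σ i)).Adj (f i a) (f i b) ↔ (G i).Adj a b := by
    rw [← graft_adj_some_some (G := G') (r := r'), ← hf, ← hf, ψ.1.map_adj_iff,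
      graft_adj_some_some]
  have hroot i : f i (r i) = r' (σ i) := by
    have h := ψ.1.map_adj_iff.2 (graft_adj_none_some (G := G) (r := r) (i := i).2 rfl)
    rw [hf, ψ.2] at h
    exact graft_adj_none_some.1 h
  refine ⟨⟨σ, fun i => ⟨⟨Equiv.ofBijective (f i) (hbij i), hadj i⟩, hroot i⟩⟩, ?_⟩
  refine RootedIso.ext ?_
  rintro (_ | ⟨i, a⟩)
  · exact ψ.2.symm
  · exact (hf i a).symm

lemma natCard_rootedIso_graft [Fintype ι] [Finite ι'] [Fintype (ι ≃ ι')] [∀ i, Finite (V i)]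
    [∀ i, Finite (V' i)] (hG : ∀ i, (G i).Connected) (hG' : ∀ i, (G' i).Connected) :
    Nat.card (RootedIso (graft G r) none (graft G' r') none) =
      ∑ σ : ι ≃ ι', ∏ i, Nat.card (RootedIso (G i) (r i) (G' (σ i)) (r' (σ i))) := by
  rw [← Nat.card_eq_of_bijective _ ⟨graftIso_injective, graftIso_surjective hG hG'⟩,
    Nat.card_sigma]
  simp only [Nat.card_pi]

end Iso

section Decomposition

variable {W : Type*} {G : SimpleGraph W} {r : W}

lemma exists_adj_reachable_induce_compl {v : W} (p : G.Walk v r) (hv : v ≠ r) :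
    ∃ c : ({r}ᶜ : Set W), G.Adj r c ∧ (G.induce {r}ᶜ).Reachable ⟨v, hv⟩ c := by
  induction p with
  | nil => exact absurd rfl hv
  | @cons a b r h p ih =>
    by_cases hb : b = r
    · subst hb
      exact ⟨⟨a, hv⟩, h.symm, .rfl⟩
    · obtain ⟨c, hadj, hreach⟩ := ih hb
      have hab : (G.induce {r}ᶜ).Adj ⟨a, hv⟩ ⟨b, hb⟩ := h
      exact ⟨c, hadj, hab.reachable.trans hreach⟩

/-- Otherwise `u`, `r`, `w` and a path avoiding `r` would be distinct paths from `u` to `w`. -/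
lemma eq_of_adj_of_reachable_induce_compl (hG : G.IsAcyclic) {u w : ({r}ᶜ : Set W)}
    (hu : G.Adj r u) (hw : G.Adj r w) (h : (G.induce {r}ᶜ).Reachable u w) : u = w := by
  by_contra hne
  obtain ⟨p, hp⟩ := h.exists_isPath
  let inclusion := SimpleGraph.Embedding.induce (G := G) {r}ᶜ
  have hp' : (p.map inclusion.toHom).IsPath :=
    hp.map inclusion.injective
  let q : G.Walk (u : W) (w : W) := .cons hu.symm (.cons hw .nil)
  have hq : q.IsPath := by
    simp [q, SimpleGraph.Walk.cons_isPath_iff, hw.ne, hu.ne', Subtype.coe_ne_coe.2 hne]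
  have hpq : p.map inclusion.toHom = q :=
    congrArg Subtype.val ((hG.subsingleton_path _ _).elim ⟨_, hp'⟩ ⟨q, hq⟩)
  have hrp : r ∉ (p.map inclusion.toHom).support := by
    rw [SimpleGraph.Walk.support_map, List.mem_map]
    rintro ⟨x, _, hx⟩
    exact x.2 hx
  have hrq : r ∈ q.support := by simp [q]
  exact hrp (hpq ▸ hrq)

lemma exists_adj_mem_component (hG : G.Connected) (c : (G.induce {r}ᶜ).ConnectedComponent) :
    ∃ a : c.supp, G.Adj r a.1 := by
  induction c using SimpleGraph.ConnectedComponent.ind with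
  | h v =>
    obtain ⟨p⟩ := hG.preconnected v.1 r
    obtain ⟨a, hadj, hreach⟩ := exists_adj_reachable_induce_compl p v.2
    exact ⟨⟨a, SimpleGraph.ConnectedComponent.eq.2 hreach.symm⟩, hadj⟩

/-- The vertices of `G` are `r` and the vertices of the components of `G - r`. -/
noncomputable def optionSigmaComponentEquiv (G : SimpleGraph W) (r : W) :
    Option (Σ c : (G.induce {r}ᶜ).ConnectedComponent, c.supp) ≃ W :=
  (Equiv.optionCongr (Equiv.sigmaFiberEquiv (G.induce {r}ᶜ).connectedComponentMk)).trans
    (Equiv.optionSubtypeNe r)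

/-- A tree is the graft of the components left by removing its root `r`, each rooted at its
neighbour `s c` of `r`. -/
noncomputable def graftComponentsIso (hG : G.IsAcyclic)
    {s : ∀ c : (G.induce {r}ᶜ).ConnectedComponent, c.supp} (hs : ∀ c, G.Adj r (s c).1) :
    RootedIso (graft (fun c => c.toSimpleGraph) s) none G r :=
  have hroot {c : (G.induce {r}ᶜ).ConnectedComponent} {a : c.supp} : G.Adj r a.1 ↔ a = s c :=
    ⟨fun h => Subtype.ext (eq_of_adj_of_reachable_induce_compl hG h (hs c)
      (SimpleGraph.ConnectedComponent.eq.1 (a.2.trans (s c).2.symm))), by rintro rfl; exact hs c⟩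
  ⟨{ toEquiv := optionSigmaComponentEquiv G r
     map_rel_iff' := by
      rintro (_ | ⟨c, a⟩) (_ | ⟨d, b⟩)
      · simp
      · rw [graft_adj_none_some]
        exact hroot
      · rw [graft_adj_some_none]
        exact (G.adj_comm _ _).trans hroot
      · refine ⟨fun h => ?_, fun h => ?_⟩
        · have hab : (G.induce {r}ᶜ).Adj a.1 b.1 := h
          obtain rfl : c = d :=
            a.2.symm.trans ((SimpleGraph.ConnectedComponent.eq.2 hab.reachable).trans b.2)
          exact graft_adj_some_some.2 hab
        · obtain rfl := index_eq_of_graft_adj h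
          exact graft_adj_some_some.1 h },
    rfl⟩

end Decomposition

end Graft

section Bouquet

variable {Q : Type*} {V : Q → Type*}

/-- The graft of `m q` copies of each rooted graph `(G q, r q)`. -/
abbrev bouquet (G : ∀ q, SimpleGraph (V q)) (r : ∀ q, V q) (m : Q → ℕ) :
    SimpleGraph (Option (Σ i : Σ q, Fin (m q), V i.1)) :=
  graft (fun i => G i.1) fun i => r i.1

variable {G : ∀ q, SimpleGraph (V q)} {r : ∀ q, V q}

lemma exists_rootedIso_bouquet {ι : Type*} [Finite ι] {W : ι → Type*}
    {H : ∀ i, SimpleGraph (W i)} {s : ∀ i, W i} {f : ι → Q}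
    (φ : ∀ i, RootedIso (H i) (s i) (G (f i)) (r (f i))) :
    ∃ m, Nonempty (RootedIso (graft H s) none (bouquet G r m) none) :=
  let e : ι ≃ Σ q, Fin (Nat.card {i // f i = q}) :=
    (Equiv.sigmaFiberEquiv f).symm.trans (Equiv.sigmaCongrRight fun _ => Finite.equivFin _)
  ⟨fun q => Nat.card {i // f i = q}, ⟨graftIso ⟨e, φ⟩⟩⟩

lemma natCard_bouquet_vertices [Fintype Q] [∀ q, Finite (V q)] (m : Q → ℕ) :
    Nat.card (Option (Σ i : Σ q, Fin (m q), V i.1)) = ∑ q, m q * Nat.card (V q) + 1 := by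
  simp [Finite.card_option, Nat.card_sigma, Fintype.sum_sigma]

lemma natCard_rootedIso_eq_ite
    (hGr : ∀ q q', Nonempty (RootedIso (G q) (r q) (G q') (r q')) → q = q') (q q' : Q) :
    Nat.card (RootedIso (G q) (r q) (G q') (r q')) =
      if q' = q then Nat.card (RootedIso (G q) (r q) (G q) (r q)) else 0 := by
  split_ifs with h
  · rw [h]
  · have := not_nonempty_iff.1 fun hiso => h (hGr q q' hiso).symm
    exact Nat.card_of_isEmpty

lemma eq_of_rootedIso_bouquet (hG : ∀ q, (G q).Connected)
    (hGr : ∀ q q', Nonempty (RootedIso (G q) (r q) (G q') (r q')) → q = q') {m m' : Q → ℕ}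
    (ψ : RootedIso (bouquet G r m) none (bouquet G r m') none) : m = m' := by
  obtain ⟨⟨σ, φ⟩, _⟩ := graftIso_surjective (fun _ => hG _) (fun _ => hG _) ψ
  have hσ i : i.1 = (σ i).1 := hGr _ _ ⟨φ i⟩
  have hfiber (m : Q → ℕ) q : Nat.card {i : Σ q, Fin (m q) // i.1 = q} = m q := by
    rw [Nat.card_congr (Equiv.sigmaSubtype q), Nat.card_fin]
  funext q
  rw [← hfiber m, ← hfiber m']
  exact Nat.card_congr (σ.subtypeEquiv fun i => by rw [hσ i])

lemma card_perm_sigma_fin_fiberwise [Fintype Q] (m : Q → ℕ) :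
    Fintype.card {σ : Equiv.Perm (Σ q, Fin (m q)) // Sigma.fst ∘ σ = Sigma.fst} =
      ∏ q, (m q).factorial := by
  rw [DomMulAct.stabilizer_card]
  refine Finset.prod_congr rfl fun q _ => ?_
  rw [Fintype.card_congr (Equiv.sigmaSubtype q), Fintype.card_fin]

lemma natCard_aut_bouquet [Fintype Q] [∀ q, Finite (V q)] (hG : ∀ q, (G q).Connected)
    (hGr : ∀ q q', Nonempty (RootedIso (G q) (r q) (G q') (r q')) → q = q') (m : Q → ℕ) :
    Nat.card (RootedIso (bouquet G r m) none (bouquet G r m) none) =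
      ∏ q, (m q).factorial * Nat.card (RootedIso (G q) (r q) (G q) (r q)) ^ m q := by
  have hperm (σ : Equiv.Perm (Σ q, Fin (m q))) :
      ∏ i, Nat.card (RootedIso (G i.1) (r i.1) (G (σ i).1) (r (σ i).1)) =
        if Sigma.fst ∘ σ = Sigma.fst then
          ∏ q, Nat.card (RootedIso (G q) (r q) (G q) (r q)) ^ m q else 0 := by
    rw [Finset.prod_congr rfl fun i _ => natCard_rootedIso_eq_ite hGr _ _, Finset.prod_ite_zero,
      Fintype.prod_sigma]
    simp [funext_iff]
  rw [natCard_rootedIso_graft (fun _ => hG _) fun _ => hG _,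
    Finset.sum_congr rfl fun σ _ => hperm σ,
    ← Finset.sum_filter, Finset.sum_const, smul_eq_mul, ← Fintype.card_subtype,
    card_perm_sigma_fin_fiberwise, Finset.prod_mul_distrib]

end Bouquet

/-! ### Pólya trees as multisets of branches -/

section PolyaTree

lemma RTree.isom_equivalence (n : ℕ) : Equivalence (RTree.Isom (n := n)) where
  refl _ := ⟨SimpleGraph.Iso.refl, rfl⟩
  symm := by
    rintro _ _ ⟨φ, hφ⟩
    exact (RootedIso.symm ⟨φ, hφ⟩).exists_of_subtype
  trans := by
    rintro _ _ _ ⟨φ, hφ⟩ ⟨ψ, hψ⟩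
    exact (RootedIso.trans ⟨φ, hφ⟩ ⟨ψ, hψ⟩).exists_of_subtype

namespace Polya

instance : IsEmpty (Polya 0) :=
  ⟨Quot.ind fun T => T.root.elim0⟩

variable {n : ℕ}

/-- A labeled tree representing a Pólya tree. -/
noncomputable def rep (q : Polya n) : RTree n :=
  Quot.out q

/-- The number of automorphisms of a Pólya tree. -/
noncomputable def autCard (q : Polya n) : ℕ :=
  q.rep.autCard

lemma mk_rep (q : Polya n) : Quot.mk _ q.rep = q :=
  Quot.out_eq q

lemma mk_eq_mk_iff {T S : RTree n} :
    (Quot.mk _ T : Polya n) = Quot.mk _ S ↔ Nonempty (RootedIso T.graph T.root S.graph S.root) :=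
  ((RTree.isom_equivalence n).quot_mk_eq_iff T S).trans nonempty_subtype.symm

lemma eq_of_rootedIso_rep {q q' : Polya n}
    (φ : RootedIso q.rep.graph q.rep.root q'.rep.graph q'.rep.root) : q = q' :=
  q.mk_rep.symm.trans ((mk_eq_mk_iff.2 ⟨φ⟩).trans q'.mk_rep)

variable {V : Type*} {G : SimpleGraph V} {r : V}

lemma exists_rootedIso_rep [Finite V] (hG : G.IsTree) (r : V) (hn : Nat.card V = n) :
    ∃ q : Polya n, Nonempty (RootedIso G r q.rep.graph q.rep.root) := by
  let e : V ≃ Fin n := Finite.equivFinOfCardEq hn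
  let φ : G ≃g G.map e.toEmbedding := SimpleGraph.Iso.map e G
  let T : RTree n := ⟨G.map e.toEmbedding, φ.isTree_iff.1 hG, e r⟩
  obtain ⟨ψ⟩ := mk_eq_mk_iff.1 (mk_rep (Quot.mk _ T)).symm
  exact ⟨Quot.mk _ T, ⟨RootedIso.trans ⟨φ, rfl⟩ ψ⟩⟩

lemma autCard_eq_natCard {q : Polya n} (φ : RootedIso G r q.rep.graph q.rep.root) :
    q.autCard = Nat.card (RootedIso G r G r) :=
  φ.natCard_aut_eq.symm

end Polya

/-- The Pólya trees with at most `N` vertices, tagged by their size: the possible branches at the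
root of a Pólya tree with `N + 1` vertices. -/
abbrev Branch (N : ℕ) :=
  Σ n : Fin (N + 1), Polya n

/-- A multiset of branches with `N` vertices in total, given by its multiplicity function. -/
abbrev Forest (N : ℕ) :=
  {m : Branch N → ℕ // ∑ q, m q * q.1 = N}

variable {N : ℕ}

namespace Branch

lemma size_ne_zero (q : Branch N) : (q.1 : ℕ) ≠ 0 := by
  obtain ⟨⟨_ | n, hn⟩, q⟩ := q
  · exact isEmptyElim (show Polya 0 from q)
  · exact Nat.succ_ne_zero n

lemma eq_of_rootedIso_rep (q q' : Branch N)
    (h : Nonempty (RootedIso q.2.rep.graph q.2.rep.root q'.2.rep.graph q'.2.rep.root)) :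
    q = q' := by
  obtain ⟨n, q⟩ := q
  obtain ⟨n', q'⟩ := q'
  obtain ⟨φ⟩ := h
  obtain rfl : n = n' := Fin.ext (by simpa using Nat.card_congr φ.1.toEquiv)
  exact congrArg (Sigma.mk n) (Polya.eq_of_rootedIso_rep φ)

lemma exists_rootedIso_rep {V : Type*} [Finite V] {G : SimpleGraph V} (hG : G.IsTree) (r : V)
    (hN : Nat.card V ≤ N) :
    ∃ q : Branch N, Nonempty (RootedIso G r q.2.rep.graph q.2.rep.root) := by
  obtain ⟨q, hq⟩ := Polya.exists_rootedIso_rep hG r rfl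
  exact ⟨⟨⟨_, Nat.lt_succ_of_le hN⟩, q⟩, hq⟩

lemma sum_filter_size_eq {M : Type*} [AddCommMonoid M] {n : ℕ} (hn : n ≤ N)
    (f : ∀ n, Polya n → M) :
    ∑ q : Branch N with (q.1 : ℕ) = n, f q.1 q.2 = ∑ q, f n q := by
  rw [Finset.sum_filter, Fintype.sum_sigma, Fintype.sum_eq_single ⟨n, Nat.lt_succ_of_le hn⟩]
  · simp
  · exact fun k hk => Finset.sum_eq_zero fun q _ => if_neg fun h => hk (Fin.ext h)

end Branch

namespace Forest

/-- The tree whose branches at the root are the elements of a given multiset. -/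
noncomputable abbrev tree (m : Branch N → ℕ) :=
  bouquet (fun q : Branch N => q.2.rep.graph) (fun q => q.2.rep.root) m

lemma exists_rootedIso_tree {V : Type*} [Finite V] {G : SimpleGraph V} (hG : G.IsTree) (r : V)
    (hN : Nat.card V = N + 1) :
    ∃ m : Forest N, Nonempty (RootedIso G r (tree m.1) none) := by
  choose s hs using exists_adj_mem_component (r := r) hG.connected
  let φ := graftComponentsIso hG.isAcyclic hs
  have hcomponent (c : (G.induce {r}ᶜ).ConnectedComponent) : Nat.card c.supp ≤ N := by
    have hlt : Nat.card ({r}ᶜ : Set V) < Nat.card V :=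
      Finite.card_subtype_lt (x := r) (not_not.2 rfl)
    have hle : Nat.card c.supp ≤ Nat.card ({r}ᶜ : Set V) := Finite.card_subtype_le _
    lia
  choose f hf using fun c : (G.induce {r}ᶜ).ConnectedComponent =>
    Branch.exists_rootedIso_rep ((hG.isAcyclic.induce {r}ᶜ).isTree_connectedComponent c) (s c)
      (hcomponent c)
  obtain ⟨m, ⟨ψ⟩⟩ := exists_rootedIso_bouquet (G := fun q : Branch N => q.2.rep.graph)
    (r := fun q => q.2.rep.root) fun c => (hf c).some
  have hm : ∑ q : Branch N, m q * q.1 = N := by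
    have hcard := natCard_bouquet_vertices (V := fun q : Branch N => Fin q.1) m
    rw [← Nat.card_congr (φ.symm.trans ψ).1.toEquiv, hN] at hcard
    simpa using hcard.symm
  exact ⟨⟨m, hm⟩, ⟨φ.symm.trans ψ⟩⟩

lemma exists_rootedIso_rep (m : Forest N) :
    ∃ p : Polya (N + 1), Nonempty (RootedIso (tree m.1) none p.rep.graph p.rep.root) := by
  refine Polya.exists_rootedIso_rep (graft_isTree fun i => i.1.2.rep.isTree) none ?_
  rw [natCard_bouquet_vertices (V := fun q : Branch N => Fin q.1)]
  simpa only [Nat.card_fin] using congrArg Nat.succ m.2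

/-- The Pólya tree whose branches at the root are the elements of a given forest. -/
noncomputable def toPolya (m : Forest N) : Polya (N + 1) :=
  (exists_rootedIso_rep m).choose

lemma nonempty_rootedIso_toPolya (m : Forest N) :
    Nonempty (RootedIso (tree m.1) none m.toPolya.rep.graph m.toPolya.rep.root) :=
  (exists_rootedIso_rep m).choose_spec

lemma toPolya_injective : Function.Injective (toPolya (N := N)) := by
  intro m m' h
  obtain ⟨φ⟩ := nonempty_rootedIso_toPolya m
  obtain ⟨ψ⟩ := nonempty_rootedIso_toPolya m'
  rw [← h] at ψ
  exact Subtype.ext (eq_of_rootedIso_bouquet (fun q => q.2.rep.isTree.connected)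
    Branch.eq_of_rootedIso_rep (φ.trans ψ.symm))

lemma toPolya_surjective : Function.Surjective (toPolya (N := N)) := by
  intro p
  obtain ⟨m, ⟨φ⟩⟩ := exists_rootedIso_tree p.rep.isTree p.rep.root (Nat.card_fin _)
  obtain ⟨ψ⟩ := nonempty_rootedIso_toPolya m
  exact ⟨m, (Polya.eq_of_rootedIso_rep (φ.trans ψ)).symm⟩

lemma toPolya_bijective : Function.Bijective (toPolya (N := N)) :=
  ⟨toPolya_injective, toPolya_surjective⟩

lemma autCard_toPolya (m : Forest N) :
    (toPolya m).autCard = ∏ q, (m.1 q).factorial * q.2.autCard ^ m.1 q := by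
  obtain ⟨φ⟩ := nonempty_rootedIso_toPolya m
  rw [Polya.autCard_eq_natCard φ]
  exact natCard_aut_bouquet (fun q => q.2.rep.isTree.connected) Branch.eq_of_rootedIso_rep m.1

noncomputable instance : Fintype (Forest N) :=
  have := Finite.of_injective _ (toPolya_injective (N := N))
  .ofFinite _

end Forest

end PolyaTree

/-- Let `F t` be the power series whose `n`-th coefficient,
for `n ≥ 1`, is `∑ |Aut(T)|^{−t}` over the isomorphism classes of rooted
labeled trees on `n` vertices (and whose constant coefficient is `0`).  Then
for every real `t` the Pólya functional equation
`F t = X · exp(∑_{j ≥ 1} (c(j,t)/j) · F_{jt}(X^j))` holds. -/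
theorem polya_functional_equation
    (A : ∀ n : ℕ, Polya n → ℕ)
    (hA : ∀ (n : ℕ) (T : RTree n), A n (Quot.mk _ T) = T.autCard)
    (F : ℝ → PowerSeries ℝ)
    (hF : ∀ (t : ℝ) (n : ℕ),
      PowerSeries.coeff n (F t) =
        if n = 0 then 0 else ∑ q : Polya n, ((A n q : ℝ)) ^ (-t)) :
    ∀ t : ℝ, F t = PowerSeries.X * pexp (polyaSum F t) := by
  have hautCard n (q : Polya n) : A n q = q.autCard := by
    rw [← q.mk_rep, hA, q.mk_rep, Polya.autCard]
  have hcoeff t n : PowerSeries.coeff n (F t) = ∑ q : Polya n, (q.autCard : ℝ) ^ (-t) := by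
    rcases eq_or_ne n 0 with rfl | hn
    · simp [hF]
    · simp [hF, hn, hautCard]
  intro t
  ext n
  rcases n with _ | N
  · rw [hF, if_pos rfl, PowerSeries.coeff_zero_X_mul]
  have hbranch t n (hn : n ≤ N) : PowerSeries.coeff n (F t) =
      ∑ q : Branch N with (q.1 : ℕ) = n, (q.2.autCard : ℝ) ^ (-t) := by
    rw [hcoeff, Branch.sum_filter_size_eq hn fun n (q : Polya n) => (q.autCard : ℝ) ^ (-t)]
  rw [PowerSeries.coeff_succ_X_mul,
    coeff_pexp_polyaSum Branch.size_ne_zero (fun q => Nat.cast_nonneg _) hbranch, hcoeff,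
    ← Forest.toPolya_bijective.sum_comp]
  simp only [Forest.autCard_toPolya, Nat.cast_prod, Nat.cast_mul, Nat.cast_pow]
end

section
/- For t ∈ ℝ, let u_t ∈ ℝ⟦X⟧ be the formal power series whose n-th coefficient, for n ≥ 1, is ∑ (2^{b(T)}/|Aut(T)|)^t, summed over the isomorphism classes of rooted labeled trees on n vertices with all out-degrees at most 2, where b(T) is the number of vertices of out-degree 2 (with constant coefficient 0). Then for every t ∈ ℝ the identity u_t = X + X·u_t + 2^{t−1}·X·u_t² + (1 − 2^{t−1})·X·u_{2t}(X²) holds in ℝ⟦X⟧, where u_{2t}(X²) denotes the power series whose n-th coefficient equals the (n/2)-th coefficient of u_{2t} if n is even and 0 otherwise. -/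
open scoped Classical BigOperators

/-- Rooted labeled trees on `n` vertices with all out-degrees at most `2`
(unary-binary trees). -/
def UBTree (n : ℕ) : Type :=
  {T : RTree n // ∀ v, T.outdeg v ≤ 2}

instance (n : ℕ) : Finite (UBTree n) := by
  unfold UBTree; infer_instance

/-- The isomorphism classes of unary-binary rooted labeled trees on `n`
vertices (unary-binary Pólya trees of size `n`). -/
def PolyaUB (n : ℕ) : Type :=
  Quot (fun T₁ T₂ : UBTree n => T₁.1.Isom T₂.1)

instance (n : ℕ) : Finite (PolyaUB n) :=
  Finite.of_surjective (Quot.mk _) Quot.exists_rep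

noncomputable instance (n : ℕ) : Fintype (PolyaUB n) := Fintype.ofFinite _

/-- The number of vertices of out-degree `2`. -/
noncomputable def binCount {n : ℕ} (T : UBTree n) : ℕ :=
  (Finset.univ.filter fun v => T.1.outdeg v = 2).card

/-- Substitution of `X^2` into a power series: the `n`-th coefficient of
`G(X²)` is the `(n/2)`-th coefficient of `G` if `n` is even and `0`
otherwise. -/
noncomputable def subXsq (G : PowerSeries ℝ) : PowerSeries ℝ :=
  PowerSeries.mk fun n => if 2 ∣ n then PowerSeries.coeff (n / 2) G else 0

/-!
Removing the root of a unary-binary Pólya tree leaves nothing, one Pólya tree, or an unordered pair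
of Pólya trees, and every such configuration arises exactly once. An automorphism of a rooted tree
permutes the root branches, preserving their isomorphism types, and then acts on each branch, so if
the root has `k` branches then the weight of the tree is `k! / |Stab|` times the product of the
weights of the branches, where `Stab ≤ S_k` is the stabilizer of the sequence of isomorphism types.
For `k = 2` this factor is `2` if the branches are distinct and `1` otherwise. A sum over unordered
pairs is half the corresponding sum over ordered pairs, up to a diagonal correction; the diagonal
`{a, a}` has size `2 |a|` and weight `w(a)²`, and contributes the term `u_{2t}(X²)`.
-/

/-! ### Generating functions -/

section SizeGenFun

variable {α β R : Type*} [CommSemiring R]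

/-- The generating function `∑ₐ f a X^(size a)` of a class `α` of weighted combinatorial objects.
The coefficients are finite sums, hence meaningful, when every level of `size` is finite. -/
noncomputable def sizeGenFun (size : α → ℕ) (f : α → R) : PowerSeries R :=
  PowerSeries.mk fun n => ∑ᶠ a ∈ size ⁻¹' {n}, f a

theorem coeff_sizeGenFun (size : α → ℕ) (f : α → R) (n : ℕ) :
    PowerSeries.coeff n (sizeGenFun size f) = ∑ᶠ a ∈ size ⁻¹' {n}, f a :=
  PowerSeries.coeff_mk _ _

theorem coeff_sizeGenFun_sigma {P : ℕ → Type*} [∀ n, Fintype (P n)] (f : (Σ n, P n) → R) (n : ℕ) :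
    PowerSeries.coeff n (sizeGenFun Sigma.fst f) = ∑ q : P n, f ⟨n, q⟩ := by
  rw [coeff_sizeGenFun, ← Set.range_sigmaMk, finsum_mem_range sigma_mk_injective,
    finsum_eq_sum_of_fintype]

theorem finite_preimage_comp {π : α → β} (hπ : Function.Injective π) {size : β → ℕ}
    (hsize : ∀ n, (size ⁻¹' {n}).Finite) (n : ℕ) : ((size ∘ π) ⁻¹' {n}).Finite := by
  rw [Set.preimage_comp]
  exact (hsize n).preimage hπ.injOn

theorem sizeGenFun_comp_equiv (e : α ≃ β) (size : β → ℕ) (f : β → R) :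
    sizeGenFun (size ∘ e) (f ∘ e) = sizeGenFun size f := by
  ext n
  simp only [coeff_sizeGenFun]
  exact finsum_mem_eq_of_bijOn e (e.bijOn fun _ => Iff.rfl) fun _ _ => rfl

theorem sizeGenFun_unit (size : Unit → ℕ) (f : Unit → R) :
    sizeGenFun size f = PowerSeries.monomial (size ()) (f ()) := by
  ext n
  rw [coeff_sizeGenFun, PowerSeries.coeff_monomial, finsum_unique, finsum_eq_if]
  simp only [Set.mem_preimage, Set.mem_singleton_iff, eq_comm]

theorem sizeGenFun_sum {size : α ⊕ β → ℕ} (hsize : ∀ n, (size ⁻¹' {n}).Finite)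
    (f : α ⊕ β → R) :
    sizeGenFun size f =
      sizeGenFun (size ∘ Sum.inl) (f ∘ Sum.inl) + sizeGenFun (size ∘ Sum.inr) (f ∘ Sum.inr) := by
  ext n
  simp only [map_add, coeff_sizeGenFun, Set.preimage_comp, Function.comp_apply]
  rw [← finsum_mem_image Sum.inl_injective.injOn, ← finsum_mem_image Sum.inr_injective.injOn,
    ← finsum_mem_union, Set.image_preimage_inl_union_image_preimage_inr]
  · exact Set.disjoint_image_inl_image_inr
  · exact ((hsize n).preimage Sum.inl_injective.injOn).image _
  · exact ((hsize n).preimage Sum.inr_injective.injOn).image _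

theorem sizeGenFun_add_one (size : α → ℕ) (f : α → R) :
    sizeGenFun (fun a => size a + 1) f = PowerSeries.X * sizeGenFun size f := by
  ext n
  cases n with
  | zero => simp [coeff_sizeGenFun]
  | succ n => simp [coeff_sizeGenFun, PowerSeries.coeff_succ_X_mul]

theorem sizeGenFun_mul_left {R : Type*} [CommRing R] {k : ℕ} (hk : k ≠ 0) (size : α → ℕ)
    (f : α → R) :
    sizeGenFun (fun a => k * size a) f = PowerSeries.expand k hk (sizeGenFun size f) := by
  ext n
  rw [coeff_sizeGenFun, PowerSeries.coeff_expand]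
  split_ifs with hdvd
  · obtain ⟨m, rfl⟩ := hdvd
    simp [coeff_sizeGenFun, hk, Nat.mul_div_cancel_left m (Nat.pos_of_ne_zero hk)]
  · refine finsum_mem_eq_zero_of_forall_eq_zero fun a ha => absurd ⟨size a, ?_⟩ hdvd
    exact (Set.mem_singleton_iff.1 ha).symm

theorem sizeGenFun_const_mul {size : α → ℕ} (hsize : ∀ n, (size ⁻¹' {n}).Finite) (c : R)
    (f : α → R) :
    sizeGenFun size (fun a => c * f a) = PowerSeries.C c * sizeGenFun size f := by
  ext n
  rw [PowerSeries.coeff_C_mul, coeff_sizeGenFun, coeff_sizeGenFun, mul_finsum_mem' _ _ (hsize n)]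

theorem preimage_add_singleton (size : α → ℕ) (size' : β → ℕ) (n : ℕ) :
    (fun p : α × β => size p.1 + size' p.2) ⁻¹' {n} =
      ⋃ k ∈ (Finset.HasAntidiagonal.antidiagonal n : Set (ℕ × ℕ)),
        (size ⁻¹' {k.1}) ×ˢ (size' ⁻¹' {k.2}) := by
  ext p
  simp [eq_comm]

theorem finite_preimage_add {size : α → ℕ} (hsize : ∀ n, (size ⁻¹' {n}).Finite)
    {size' : β → ℕ} (hsize' : ∀ n, (size' ⁻¹' {n}).Finite) (n : ℕ) :
    ((fun p : α × β => size p.1 + size' p.2) ⁻¹' {n}).Finite := by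
  rw [preimage_add_singleton]
  exact (Finset.finite_toSet _).biUnion fun k _ => (hsize k.1).prod (hsize' k.2)

theorem finsum_mem_prod_mul {s : Set α} (hs : s.Finite) {t : Set β} (ht : t.Finite) (f : α → R)
    (g : β → R) :
    ∑ᶠ p ∈ s ×ˢ t, f p.1 * g p.2 = (∑ᶠ a ∈ s, f a) * ∑ᶠ b ∈ t, g b := by
  lift s to Finset α using hs
  lift t to Finset β using ht
  rw [← Finset.coe_product, finsum_mem_coe_finset, finsum_mem_coe_finset, finsum_mem_coe_finset,
    Finset.sum_mul_sum, Finset.sum_product]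

theorem sizeGenFun_prod {size : α → ℕ} (hsize : ∀ n, (size ⁻¹' {n}).Finite)
    {size' : β → ℕ} (hsize' : ∀ n, (size' ⁻¹' {n}).Finite) (f : α → R) (g : β → R) :
    sizeGenFun (fun p : α × β => size p.1 + size' p.2) (fun p => f p.1 * g p.2) =
      sizeGenFun size f * sizeGenFun size' g := by
  ext n
  rw [coeff_sizeGenFun, preimage_add_singleton, PowerSeries.coeff_mul,
    finsum_mem_biUnion _ (Finset.finite_toSet _) fun k _ => (hsize k.1).prod (hsize' k.2),
    finsum_mem_coe_finset]
  · refine Finset.sum_congr rfl fun k _ => ?_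
    rw [coeff_sizeGenFun, coeff_sizeGenFun, finsum_mem_prod_mul (hsize k.1) (hsize' k.2)]
  · rintro k - l - hkl
    refine Set.disjoint_left.2 fun p hk hl => hkl ?_
    exact Prod.ext (hk.1.symm.trans hl.1) (hk.2.symm.trans hl.2)

theorem sizeGenFun_comp {π : α → β} (hπ : ∀ b, (π ⁻¹' {b}).Finite) {size : β → ℕ}
    (hsize : ∀ n, (size ⁻¹' {n}).Finite) (f : α → R) :
    sizeGenFun (size ∘ π) f = sizeGenFun size fun b => ∑ᶠ a ∈ π ⁻¹' {b}, f a := by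
  ext n
  simp only [coeff_sizeGenFun]
  rw [← finsum_mem_biUnion _ (hsize n) fun b _ => hπ b, Set.biUnion_preimage_singleton,
    Set.preimage_comp]
  exact Set.pairwiseDisjoint_fiber π _

theorem preimage_uncurry_sym2Mk (a b : α) :
    Function.uncurry Sym2.mk ⁻¹' {s(a, b)} = {(a, b), (b, a)} := by
  ext ⟨x, y⟩
  simp

theorem sizeGenFun_sym2 {size : Sym2 α → ℕ} (hsize : ∀ n, (size ⁻¹' {n}).Finite)
    {F : Sym2 α → R} {p : α × α → R} {d : α → R}
    (hne : ∀ a b, a ≠ b → F s(a, b) = p (a, b) + p (b, a))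
    (hdiag : ∀ a, F s(a, a) = p (a, a) + d a) :
    sizeGenFun size F =
      sizeGenFun (size ∘ Function.uncurry Sym2.mk) p + sizeGenFun (size ∘ Sym2.diag) d := by
  have finite_mk : ∀ s : Sym2 α, (Function.uncurry Sym2.mk ⁻¹' {s}).Finite := by
    rintro ⟨a, b⟩
    exact preimage_uncurry_sym2Mk a b ▸ Set.toFinite _
  have finite_diag : ∀ s : Sym2 α, (Sym2.diag ⁻¹' {s}).Finite := fun s =>
    (Set.finite_singleton s).preimage Sym2.diag_injective.injOn
  have hF : ∀ s, F s = (∑ᶠ q ∈ Function.uncurry Sym2.mk ⁻¹' {s}, p q) +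
      ∑ᶠ a ∈ Sym2.diag ⁻¹' {s}, d a := by
    rintro ⟨a, b⟩
    rw [preimage_uncurry_sym2Mk]
    by_cases hab : a = b
    · subst hab
      have : Sym2.diag ⁻¹' {s(a, a)} = {a} := by ext; simp [Sym2.diag]
      rw [this, Set.pair_eq_singleton, finsum_mem_singleton, finsum_mem_singleton, hdiag]
    · have : Sym2.diag ⁻¹' {s(a, b)} = ∅ :=
        Set.eq_empty_of_forall_notMem fun c (hc : s(c, c) = s(a, b)) => hab (by grind)
      rw [this, finsum_mem_pair (by simp [hab]), finsum_mem_empty, add_zero, hne a b hab]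
  ext n
  rw [sizeGenFun_comp finite_mk hsize, sizeGenFun_comp finite_diag hsize, map_add]
  simp only [coeff_sizeGenFun, hF]
  exact finsum_mem_add_distrib (hsize n)

end SizeGenFun

theorem subXsq_eq_expand (G : PowerSeries ℝ) : subXsq G = PowerSeries.expand 2 two_ne_zero G := by
  ext n
  rw [subXsq, PowerSeries.coeff_mk, PowerSeries.coeff_expand]

/-! ### Grafting graphs at a new root -/

section Graft

theorem reachable_of_forall_adj {V W : Type*} {G : SimpleGraph V} {H : SimpleGraph W} {f : V → W}
    (hf : ∀ x y, G.Adj x y → H.Reachable (f x) (f y)) {x y : V} (hxy : G.Reachable x y) :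
    H.Reachable (f x) (f y) := by
  rw [SimpleGraph.reachable_iff_reflTransGen] at hxy
  induction hxy with
  | refl => exact .refl _
  | tail _ hadj ih => exact ih.trans (hf _ _ hadj)

variable {I : Type*} {V : I → Type*}

/-- Adjacency in the graph obtained from the rooted graphs `(G i, r i)` by joining a new vertex
`none` to every root `r i`. -/
inductive GraftAdj_s17 (G : ∀ i, SimpleGraph (V i)) (r : ∀ i, V i) :
    Option (Σ i, V i) → Option (Σ i, V i) → Prop
  | down (i : I) : GraftAdj_s17 G r none (some ⟨i, r i⟩)
  | up (i : I) : GraftAdj_s17 G r (some ⟨i, r i⟩) none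
  | branch (i : I) {v w : V i} (hvw : (G i).Adj v w) : GraftAdj_s17 G r (some ⟨i, v⟩) (some ⟨i, w⟩)

/-- The graph obtained from the rooted graphs `(G i, r i)` by joining a new vertex `none` to every
root `r i`. -/
def graftGraph (G : ∀ i, SimpleGraph (V i)) (r : ∀ i, V i) : SimpleGraph (Option (Σ i, V i)) where
  Adj := GraftAdj_s17 G r
  symm := ⟨by
    rintro _ _ (i | i | ⟨i, hvw⟩)
    exacts [.up i, .down i, .branch i hvw.symm]⟩
  loopless := ⟨by
    rintro _ ⟨⟩
    exact SimpleGraph.irrefl _ ‹_›⟩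

variable {G : ∀ i, SimpleGraph (V i)} {r : ∀ i, V i}

theorem graftGraph_adj_none_some {i : I} {v : V i} :
    (graftGraph G r).Adj none (some ⟨i, v⟩) ↔ v = r i := by
  constructor
  · rintro ⟨⟩
    rfl
  · rintro rfl
    exact .down i

theorem graftGraph_adj_some_some {i : I} {v w : V i} :
    (graftGraph G r).Adj (some ⟨i, v⟩) (some ⟨i, w⟩) ↔ (G i).Adj v w := by
  constructor
  · rintro ⟨⟩
    assumption
  · exact .branch i

theorem fst_eq_fst_of_graftGraph_adj {x y : Σ i, V i}
    (hxy : (graftGraph G r).Adj (some x) (some y)) : x.1 = y.1 := by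
  cases hxy
  rfl

theorem graftGraph_connected (hG : ∀ i, (G i).Connected) : (graftGraph G r).Connected := by
  have reachable_none : ∀ x, (graftGraph G r).Reachable none x := by
    rintro (_ | ⟨i, v⟩)
    · exact .refl _
    · have hroot : (graftGraph G r).Adj none (some ⟨i, r i⟩) := .down i
      let inclusion : G i →g graftGraph G r := ⟨fun v => some ⟨i, v⟩, .branch i⟩
      exact hroot.reachable.trans (((hG i).preconnected (r i) v).map inclusion)
  exact ⟨fun x y => (reachable_none x).symm.trans (reachable_none y)⟩

theorem graftGraph_isBridge_root (i : I) :
    (graftGraph G r).IsBridge s(none, some ⟨i, r i⟩) := by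
  rw [SimpleGraph.isBridge_iff]
  intro hreach
  -- Without this edge, lying in branch `i` is constant along edges.
  have hconst := reachable_of_forall_adj (H := ⊥) (f := fun x => ∃ v, x = some ⟨i, v⟩) ?_ hreach
  · simp at hconst
  · intro x y hxy
    rw [SimpleGraph.deleteEdges_adj] at hxy
    rw [SimpleGraph.reachable_bot]
    rcases hxy with ⟨j | j | ⟨j, -⟩, hne⟩ <;> grind

/-- The retraction of a grafted graph onto its branch `i`, sending every other vertex to the root
of the branch. -/
noncomputable def branchRetraction (r : ∀ i, V i) (i : I) : Option (Σ i, V i) → V i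
  | none => r i
  | some ⟨j, v⟩ => if h : j = i then h ▸ v else r i

theorem branchRetraction_some_self (i : I) (v : V i) : branchRetraction r i (some ⟨i, v⟩) = v := by
  simp [branchRetraction]

theorem branchRetraction_some_of_ne {i j : I} (hj : j ≠ i) (v : V j) :
    branchRetraction r i (some ⟨j, v⟩) = r i := by
  simp [branchRetraction, hj]

theorem branchRetraction_some_root (i j : I) : branchRetraction r i (some ⟨j, r j⟩) = r i := by
  by_cases hj : j = i
  · subst hj
    exact branchRetraction_some_self j (r j)
  · exact branchRetraction_some_of_ne hj _

theorem graftGraph_isBridge_branch {i : I} {v w : V i} (hvw : (G i).IsBridge s(v, w)) :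
    (graftGraph G r).IsBridge s(some ⟨i, v⟩, some ⟨i, w⟩) := by
  rw [SimpleGraph.isBridge_iff] at hvw ⊢
  refine fun hreach => hvw ?_
  have hretract := reachable_of_forall_adj (H := (G i).deleteEdges {s(v, w)})
    (f := branchRetraction r i) ?_ hreach
  · simpa only [branchRetraction_some_self] using hretract
  · intro x y hxy
    rw [SimpleGraph.deleteEdges_adj] at hxy
    rcases hxy with ⟨j | j | ⟨j, hadj⟩, hne⟩
    · rw [branchRetraction_some_root, branchRetraction]
    · rw [branchRetraction_some_root, branchRetraction]
    · by_cases hj : j = i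
      · subst hj
        simp only [branchRetraction_some_self]
        refine SimpleGraph.Adj.reachable (SimpleGraph.deleteEdges_adj.2 ⟨hadj, ?_⟩)
        simpa using hne
      · rw [branchRetraction_some_of_ne hj, branchRetraction_some_of_ne hj]

theorem graftGraph_isAcyclic (hG : ∀ i, (G i).IsAcyclic) : (graftGraph G r).IsAcyclic := by
  rw [SimpleGraph.isAcyclic_iff_forall_adj_isBridge]
  rintro _ _ (i | i | ⟨i, hvw⟩)
  · exact graftGraph_isBridge_root i
  · exact Sym2.eq_swap ▸ graftGraph_isBridge_root i
  · exact graftGraph_isBridge_branch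
      (SimpleGraph.isAcyclic_iff_forall_adj_isBridge.1 (hG i) hvw)

theorem adj_map_iff_graftGraph_adj {W : Type*} {H : SimpleGraph W} {f : Option (Σ i, V i) → W}
    (hroot : ∀ i (v : V i), H.Adj (f none) (f (some ⟨i, v⟩)) ↔ v = r i)
    (hbranch : ∀ i (v w : V i), H.Adj (f (some ⟨i, v⟩)) (f (some ⟨i, w⟩)) ↔ (G i).Adj v w)
    (hcross : ∀ x y, H.Adj (f (some x)) (f (some y)) → x.1 = y.1) (x y : Option (Σ i, V i)) :
    H.Adj (f x) (f y) ↔ (graftGraph G r).Adj x y := by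
  rcases x with _ | ⟨i, v⟩ <;> rcases y with _ | ⟨j, w⟩
  · simp only [SimpleGraph.irrefl]
  · rw [hroot, graftGraph_adj_none_some]
  · rw [H.adj_comm, hroot, (graftGraph G r).adj_comm, graftGraph_adj_none_some]
  · by_cases hij : i = j
    · subst hij
      rw [hbranch, graftGraph_adj_some_some]
    · exact iff_of_false (fun h => hij (hcross _ _ h))
        fun h => hij (fst_eq_fst_of_graftGraph_adj h)

theorem neighborSet_graftGraph_none :
    (graftGraph G r).neighborSet none = Set.range fun i => some ⟨i, r i⟩ := by
  ext x
  constructor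
  · rintro ⟨i⟩
    exact ⟨i, rfl⟩
  · rintro ⟨i, rfl⟩
    exact .down i

theorem neighborSet_graftGraph_some_root (i : I) :
    (graftGraph G r).neighborSet (some ⟨i, r i⟩) =
      insert none ((fun w => some ⟨i, w⟩) '' (G i).neighborSet (r i)) := by
  ext x
  constructor
  · rintro (_ | _ | ⟨_, hw⟩)
    exacts [.inl rfl, .inr ⟨_, hw, rfl⟩]
  · rintro (rfl | ⟨w, hw, rfl⟩)
    exacts [.up i, .branch i hw]

theorem neighborSet_graftGraph_some_of_ne {i : I} {v : V i} (hv : v ≠ r i) :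
    (graftGraph G r).neighborSet (some ⟨i, v⟩) = (fun w => some ⟨i, w⟩) '' (G i).neighborSet v := by
  ext x
  constructor
  · rintro (_ | _ | ⟨_, hw⟩)
    exacts [absurd rfl hv, ⟨_, hw, rfl⟩]
  · rintro ⟨w, hw, rfl⟩
    exact .branch i hw

end Graft

section RootBranches

variable {V : Type*} {G : SimpleGraph V} {r : V}

theorem exists_adj_root_reachable {x : V} (hxr : G.Reachable x r) (hx : x ≠ r) :
    ∃ y : {v // v ≠ r}, G.Adj r y ∧ (G.induce {v | v ≠ r}).Reachable y ⟨x, hx⟩ := by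
  obtain ⟨p⟩ := hxr
  induction p with
  | nil => exact absurd rfl hx
  | @cons a b r hab p ih =>
    by_cases hb : b = r
    · subst hb
      exact ⟨⟨a, hx⟩, hab.symm, .refl _⟩
    · obtain ⟨y, hy, hyb⟩ := ih hb
      have hba : (G.induce {v | v ≠ r}).Adj ⟨b, hb⟩ ⟨a, hx⟩ := hab.symm
      exact ⟨y, hy, hyb.trans hba.reachable⟩

theorem eq_of_adj_root_of_reachable (hG : G.IsAcyclic) {y y' : {v // v ≠ r}} (hy : G.Adj r y)
    (hy' : G.Adj r y') (hreach : (G.induce {v | v ≠ r}).Reachable y y') : y = y' := by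
  obtain ⟨p, hp⟩ := hreach.exists_isPath
  let ι : G.induce {v | v ≠ r} →g G := (SimpleGraph.Embedding.induce _).toHom
  have hι : Function.Injective ι := Subtype.val_injective
  let q : G.Walk y y' := p.map ι
  have hq : (SimpleGraph.Walk.cons hy q).IsPath := by
    refine (hp.map hι).cons fun hr => ?_
    obtain ⟨v, -, hv⟩ := List.mem_map.1 (SimpleGraph.Walk.support_map _ p ▸ hr)
    exact v.2 hv
  have hlength := congrArg (fun s : G.Path r y' => s.1.length)
    ((hG.subsingleton_path r y').elim ⟨_, hq⟩ (SimpleGraph.Path.singleton hy'))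
  exact Subtype.ext (SimpleGraph.Walk.eq_of_length_eq_zero (p := q) (by simpa using hlength))

variable (r) in
theorem exists_graftGraph_components_iso (hG : G.IsTree) :
    ∃ (ρ : ∀ c : (G.induce {v | v ≠ r}).ConnectedComponent, c)
      (φ : graftGraph (fun c => c.toSimpleGraph) ρ ≃g G), φ none = r := by
  set H := G.induce {v | v ≠ r}
  have exists_root (c : H.ConnectedComponent) : ∃ y : c, G.Adj r y.1 := by
    induction c using SimpleGraph.ConnectedComponent.ind with
    | h x =>
      obtain ⟨y, hy, hyx⟩ := exists_adj_root_reachable (hG.connected.preconnected x r) x.2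
      exact ⟨⟨y, SimpleGraph.ConnectedComponent.sound hyx⟩, hy⟩
  choose ρ hρ using exists_root
  let e : Option (Σ c : H.ConnectedComponent, c) ≃ V :=
    (Equiv.optionCongr (Equiv.sigmaFiberEquiv H.connectedComponentMk)).trans
      (Equiv.optionSubtypeNe r)
  refine ⟨ρ, ⟨e, fun {x y} => adj_map_iff_graftGraph_adj (fun c v => ?_) (fun c v w => Iff.rfl)
    ?_ x y⟩, rfl⟩
  · refine ⟨fun hv => Subtype.ext ?_, fun hv => hv ▸ hρ c⟩
    exact eq_of_adj_root_of_reachable hG.isAcyclic hv (hρ c) (c.reachable_of_mem_supp v.2 (ρ c).2)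
  · rintro ⟨c, v⟩ ⟨d, w⟩ (hvw : H.Adj v w)
    exact v.2.symm.trans <|
      (SimpleGraph.ConnectedComponent.connectedComponentMk_eq_of_adj hvw).trans w.2

end RootBranches

theorem exists_eq_sigmaCongr {I J : Type*} {α : I → Type*} {β : J → Type*} [∀ i, Nonempty (α i)]
    [∀ j, Nonempty (β j)] (e : (Σ i, α i) ≃ Σ j, β j)
    (he : ∀ x y, (e x).1 = (e y).1 ↔ x.1 = y.1) :
    ∃ (σ : I ≃ J) (ψ : ∀ i, α i ≃ β (σ i)), e = Equiv.sigmaCongr σ ψ := by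
  have hfst : ∀ x, (e x).1 = (e ⟨x.1, Classical.arbitrary _⟩).1 := fun x => (he _ _).2 rfl
  let σ : I ≃ J := Equiv.ofBijective (fun i => (e ⟨i, Classical.arbitrary _⟩).1) <| by
    refine ⟨fun i i' h => (he _ _).1 h, fun j => ?_⟩
    exact ⟨(e.symm ⟨j, Classical.arbitrary _⟩).1, by simp [← hfst]⟩
  have hσ : ∀ x, (e x).1 = σ x.1 := hfst
  let ψ i : α i ≃ β (σ i) := (Equiv.sigmaSubtype i).symm.trans <|
    (e.subtypeEquiv fun x => by rw [hσ, σ.injective.eq_iff]).trans (Equiv.sigmaSubtype (σ i))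
  refine ⟨σ, ψ, Equiv.ext fun ⟨i, v⟩ => ?_⟩
  exact (congrArg Subtype.val ((Equiv.sigmaSubtype (σ i)).symm_apply_apply ⟨e ⟨i, v⟩, hσ _⟩)).symm

/-! ### Rooted trees -/

universe u

/-- A finite rooted tree on an arbitrary vertex type, so that trees can be grafted and decomposed
without choosing labels. -/
structure FinRootedTree where
  V : Type u
  [fintypeV : Fintype V]
  graph : SimpleGraph V
  isTree : graph.IsTree
  root : V

namespace FinRootedTree

attribute [instance] fintypeV

variable {R S T : FinRootedTree.{u}}

/-- The number of children of a vertex. -/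
noncomputable def outdeg (R : FinRootedTree.{u}) (v : R.V) : ℕ :=
  if v = R.root then (R.graph.neighborSet v).ncard else (R.graph.neighborSet v).ncard - 1

theorem outdeg_root (R : FinRootedTree.{u}) :
    R.outdeg R.root = (R.graph.neighborSet R.root).ncard :=
  if_pos rfl

theorem outdeg_of_ne_root (R : FinRootedTree.{u}) {v : R.V} (hv : v ≠ R.root) :
    R.outdeg v = (R.graph.neighborSet v).ncard - 1 :=
  if_neg hv

/-- The isomorphisms of rooted trees: graph isomorphisms mapping root to root. -/
abbrev Iso (R S : FinRootedTree.{u}) : Type u :=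
  {φ : R.graph ≃g S.graph // φ R.root = S.root}

namespace Iso

/-- The identity isomorphism. -/
def refl (R : FinRootedTree.{u}) : Iso R R := ⟨.refl, rfl⟩

/-- The inverse isomorphism. -/
def symm (φ : Iso R S) : Iso S R := ⟨φ.1.symm, φ.1.symm_apply_eq.2 φ.2.symm⟩

/-- The composite isomorphism. -/
def trans (φ : Iso R S) (ψ : Iso S T) : Iso R T := ⟨φ.1.trans ψ.1, by simp [φ.2, ψ.2]⟩

instance : Finite (Iso R S) :=
  Finite.of_injective (fun φ : Iso R S => (φ.1 : R.V → S.V))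
    (DFunLike.coe_injective.comp Subtype.val_injective)

theorem card_iso_congr_left (φ : Iso R S) : Nat.card (Iso R T) = Nat.card (Iso S T) :=
  Nat.card_congr
    { toFun := φ.symm.trans
      invFun := φ.trans
      left_inv := fun ψ => by ext v; simp [trans, symm]
      right_inv := fun ψ => by ext v; simp [trans, symm] }

theorem card_iso_congr_right (φ : Iso R S) : Nat.card (Iso T R) = Nat.card (Iso T S) :=
  Nat.card_congr
    { toFun := fun ψ => ψ.trans φ
      invFun := fun ψ => ψ.trans φ.symm
      left_inv := fun ψ => by ext v; simp [trans, symm]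
      right_inv := fun ψ => by ext v; simp [trans, symm] }

theorem outdeg_eq (φ : Iso R S) (v : R.V) : S.outdeg (φ.1 v) = R.outdeg v := by
  simp only [outdeg, ← φ.1.image_neighborSet, Set.ncard_image_of_injective _ φ.1.injective, ← φ.2,
    φ.1.injective.eq_iff]

end Iso

open Nat in
/-- The number of plane representations of `R`, as the quotient `∏ᵥ outdeg(v)! / |Aut R|`. -/
noncomputable def weight (R : FinRootedTree.{u}) : ℝ :=
  (∏ v, (R.outdeg v)! : ℕ) / Nat.card (Iso R R)

theorem weight_pos (R : FinRootedTree.{u}) : 0 < R.weight := by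
  have : Nonempty (Iso R R) := ⟨.refl R⟩
  refine div_pos (Nat.cast_pos.2 ?_) (Nat.cast_pos.2 Nat.card_pos)
  exact Finset.prod_pos fun v _ => Nat.factorial_pos _

theorem Iso.weight_eq (φ : Iso R S) : R.weight = S.weight := by
  have hprod : ∏ v, (R.outdeg v).factorial = ∏ v, (S.outdeg v).factorial :=
    Fintype.prod_equiv φ.1.toEquiv _ _ fun v => congrArg Nat.factorial (φ.outdeg_eq v).symm
  rw [weight, weight, φ.card_iso_congr_left, φ.card_iso_congr_right, hprod]

section Graft

variable {I J : Type u} [Fintype I] [Fintype J]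

/-- The rooted tree whose root branches are the `A i`. -/
def graft (A : I → FinRootedTree.{u}) : FinRootedTree.{u} where
  V := Option (Σ i, (A i).V)
  graph := graftGraph (fun i => (A i).graph) fun i => (A i).root
  isTree := ⟨graftGraph_connected fun i => (A i).isTree.connected,
    graftGraph_isAcyclic fun i => (A i).isTree.isAcyclic⟩
  root := none

variable (A : I → FinRootedTree.{u}) (B : J → FinRootedTree.{u})

theorem card_graft : Fintype.card (graft A).V = (∑ i, Fintype.card (A i).V) + 1 := by
  change Fintype.card (Option (Σ i, (A i).V)) = _
  rw [Fintype.card_option, Fintype.card_sigma]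

theorem outdeg_graft_none : (graft A).outdeg none = Fintype.card I := by
  refine (graft A).outdeg_root.trans ?_
  have hinj : Function.Injective fun i => (some ⟨i, (A i).root⟩ : Option (Σ i, (A i).V)) :=
    fun i j hij => congrArg Sigma.fst (Option.some_injective _ hij)
  rw [← Nat.card_eq_fintype_card, ← Set.ncard_range_of_injective hinj]
  exact congrArg Set.ncard neighborSet_graftGraph_none

theorem outdeg_graft_some (i : I) (v : (A i).V) :
    (graft A).outdeg (some ⟨i, v⟩) = (A i).outdeg v := by
  refine ((graft A).outdeg_of_ne_root (Option.some_ne_none _)).trans ?_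
  have hinj : Function.Injective fun w => (some ⟨i, w⟩ : Option (Σ i, (A i).V)) :=
    (Option.some_injective _).comp sigma_mk_injective
  by_cases hv : v = (A i).root
  · subst hv
    rw [outdeg_root, ← Set.ncard_image_of_injective _ hinj]
    refine (congrArg (Set.ncard · - 1) (neighborSet_graftGraph_some_root i)).trans ?_
    rw [Set.ncard_insert_of_notMem (by simp) (Set.toFinite _), Nat.add_sub_cancel]
  · rw [outdeg_of_ne_root _ hv, ← Set.ncard_image_of_injective _ hinj]
    exact congrArg (Set.ncard · - 1) (neighborSet_graftGraph_some_of_ne hv)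

theorem forall_outdeg_graft_le_iff {d : ℕ} :
    (∀ v, (graft A).outdeg v ≤ d) ↔ Fintype.card I ≤ d ∧ ∀ i v, (A i).outdeg v ≤ d := by
  rw [← outdeg_graft_none A]
  simp only [← outdeg_graft_some A]
  exact Option.forall.trans (and_congr_right' Sigma.forall)

open Nat in
theorem prod_factorial_outdeg_graft :
    ∏ v, ((graft A).outdeg v)! = (Fintype.card I)! * ∏ i, ∏ v, ((A i).outdeg v)! := by
  change ∏ v : Option (Σ i, (A i).V), ((graft A).outdeg v)! = _
  rw [Fintype.prod_option, Fintype.prod_sigma, outdeg_graft_none]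
  simp only [outdeg_graft_some]

variable {A B}

theorem graft_adj_none_some {i : I} {v : (A i).V} :
    (graft A).graph.Adj none (some ⟨i, v⟩) ↔ v = (A i).root :=
  graftGraph_adj_none_some

theorem graft_adj_some_some {i : I} {v w : (A i).V} :
    (graft A).graph.Adj (some ⟨i, v⟩) (some ⟨i, w⟩) ↔ (A i).graph.Adj v w :=
  graftGraph_adj_some_some

/-- The isomorphism of grafted trees that permutes the branches by `σ` and acts on branch `i`
by `ψ i`. -/
def graftIso (σ : I ≃ J) (ψ : ∀ i, Iso (A i) (B (σ i))) : Iso (graft A) (graft B) :=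
  ⟨⟨Equiv.optionCongr (Equiv.sigmaCongr σ fun i => (ψ i).1.toEquiv), fun {x y} =>
    adj_map_iff_graftGraph_adj
      (fun i _ => graft_adj_none_some.trans ((ψ i).1.injective.eq_iff' (ψ i).2))
      (fun i _ _ => graft_adj_some_some.trans (ψ i).1.map_adj_iff)
      (fun _ _ hxy => σ.injective (fst_eq_fst_of_graftGraph_adj hxy)) x y⟩, rfl⟩

theorem graftIso_apply_some (σ : I ≃ J) (ψ : ∀ i, Iso (A i) (B (σ i))) (i : I) (v : (A i).V) :
    (graftIso σ ψ).1 (some ⟨i, v⟩) = (some ⟨σ i, (ψ i).1 v⟩ : Option (Σ j, (B j).V)) :=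
  rfl

theorem graftIso_injective :
    Function.Injective fun p : Σ σ : I ≃ J, ∀ i, Iso (A i) (B (σ i)) => graftIso p.1 p.2 := by
  rintro ⟨σ, ψ⟩ ⟨τ, χ⟩ (h : graftIso σ ψ = graftIso τ χ)
  have hsome (i : I) (v : (A i).V) :
      (⟨σ i, (ψ i).1 v⟩ : Σ j, (B j).V) = ⟨τ i, (χ i).1 v⟩ := by
    rw [← Option.some_inj, ← graftIso_apply_some, h, graftIso_apply_some]
  obtain rfl : σ = τ := Equiv.ext fun i => congrArg Sigma.fst (hsome i (A i).root)
  congr 1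
  ext i v
  exact sigma_mk_injective (β := fun j => (B j).V) (hsome i v)

theorem fst_eq_fst_of_iso_graft (φ : Iso (graft A) (graft B)) {e : (Σ i, (A i).V) → Σ j, (B j).V}
    (he : ∀ x, φ.1 (some x) = (some (e x) : Option (Σ j, (B j).V))) {x y : Σ i, (A i).V}
    (hxy : x.1 = y.1) : (e x).1 = (e y).1 := by
  obtain ⟨i, v⟩ := x
  obtain ⟨_, w⟩ := y
  subst hxy
  rw [← SimpleGraph.reachable_bot]
  refine reachable_of_forall_adj (f := fun v => (e ⟨i, v⟩).1) (fun v w hvw => ?_)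
    ((A i).isTree.connected.preconnected v w)
  rw [SimpleGraph.reachable_bot]
  have hadj : (graft B).graph.Adj (φ.1 (some ⟨i, v⟩)) (φ.1 (some ⟨i, w⟩)) :=
    φ.1.map_adj_iff.2 (.branch i hvw)
  rw [he, he] at hadj
  exact fst_eq_fst_of_graftGraph_adj hadj

theorem exists_sigmaCongr_of_iso_graft (φ : Iso (graft A) (graft B)) :
    ∃ (σ : I ≃ J) (ψ : ∀ i, (A i).V ≃ (B (σ i)).V), ∀ i v,
      φ.1 (some ⟨i, v⟩) = (some ⟨σ i, ψ i v⟩ : Option (Σ j, (B j).V)) := by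
  let f : Option (Σ i, (A i).V) ≃ Option (Σ j, (B j).V) := φ.1.toEquiv
  have hnone : f none = none := φ.2
  let e : (Σ i, (A i).V) ≃ Σ j, (B j).V := f.removeNone
  have he (x : Σ i, (A i).V) : f (some x) = some (e x) := by
    refine (f.removeNone_some ?_).symm
    rw [← Option.ne_none_iff_exists']
    exact fun h => Option.some_ne_none x (f.injective (h.trans hnone.symm))
  have he' (y : Σ j, (B j).V) : f.symm (some y) = some (e.symm y) := by
    rw [Equiv.symm_apply_eq, he, Equiv.apply_symm_apply]
  have : ∀ i, Nonempty (A i).V := fun i => ⟨(A i).root⟩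
  have : ∀ j, Nonempty (B j).V := fun j => ⟨(B j).root⟩
  obtain ⟨σ, ψ, hψ⟩ := exists_eq_sigmaCongr e fun x y =>
    ⟨fun h => by simpa using fst_eq_fst_of_iso_graft φ.symm he' h, fst_eq_fst_of_iso_graft φ he⟩
  exact ⟨σ, ψ, fun i v => (he _).trans (by rw [hψ]; rfl)⟩

theorem exists_graftIso_eq (φ : Iso (graft A) (graft B)) :
    ∃ (σ : I ≃ J) (ψ : ∀ i, Iso (A i) (B (σ i))), graftIso σ ψ = φ := by
  obtain ⟨σ, ψ, hψ⟩ := exists_sigmaCongr_of_iso_graft φ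
  have map_adj (i : I) (v w : (A i).V) :
      (B (σ i)).graph.Adj (ψ i v) (ψ i w) ↔ (A i).graph.Adj v w := by
    have hadj := φ.1.map_adj_iff (v := some ⟨i, v⟩) (w := some ⟨i, w⟩)
    rw [hψ, hψ] at hadj
    exact graft_adj_some_some.symm.trans (hadj.trans graft_adj_some_some)
  have map_root (i : I) : ψ i (A i).root = (B (σ i)).root := by
    have hadj := φ.1.map_adj_iff (v := (graft A).root) (w := some ⟨i, (A i).root⟩)
    rw [hψ, φ.2] at hadj
    exact graft_adj_none_some.1 (hadj.2 (.down i))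
  refine ⟨σ, fun i => ⟨⟨ψ i, map_adj i _ _⟩, map_root i⟩, ?_⟩
  ext (_ | ⟨i, v⟩)
  · exact φ.2.symm
  · exact (hψ i v).symm

theorem card_iso_graft :
    Nat.card (Iso (graft A) (graft B)) =
      Nat.card (Σ σ : I ≃ J, ∀ i, Iso (A i) (B (σ i))) :=
  (Nat.card_congr (Equiv.ofBijective _ ⟨graftIso_injective, fun φ =>
    let ⟨σ, ψ, h⟩ := exists_graftIso_eq φ
    ⟨⟨σ, ψ⟩, h⟩⟩)).symm

theorem card_iso_eq_ite (R S : FinRootedTree.{u}) :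
    Nat.card (Iso R S) = if Nonempty (Iso R S) then Nat.card (Iso R R) else 0 := by
  split_ifs with h
  · exact h.some.card_iso_congr_right.symm
  · rw [not_nonempty_iff] at h
    exact Nat.card_of_isEmpty

theorem card_aut_graft (A : I → FinRootedTree.{u}) :
    Nat.card (Iso (graft A) (graft A)) =
      Nat.card {σ : Equiv.Perm I // ∀ i, Nonempty (Iso (A i) (A (σ i)))} *
        ∏ i, Nat.card (Iso (A i) (A i)) := by
  rw [card_iso_graft, Nat.card_sigma]
  have card_pi (σ : Equiv.Perm I) : Nat.card (∀ i, Iso (A i) (A (σ i))) =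
      if ∀ i, Nonempty (Iso (A i) (A (σ i))) then ∏ i, Nat.card (Iso (A i) (A i)) else 0 := by
    rw [Nat.card_pi, Finset.prod_congr rfl fun i _ => card_iso_eq_ite (A i) (A (σ i)),
      Finset.prod_ite_zero]
    simp only [Finset.mem_univ, forall_const]
  rw [Finset.sum_congr rfl fun σ _ => card_pi σ, ← Finset.sum_filter, Finset.sum_const,
    smul_eq_mul, Nat.card_eq_fintype_card, Fintype.card_subtype]

open Nat in
theorem weight_graft (A : I → FinRootedTree.{u}) :
    (graft A).weight =
      (Fintype.card I)! / Nat.card {σ : Equiv.Perm I // ∀ i, Nonempty (Iso (A i) (A (σ i)))} *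
        ∏ i, (A i).weight := by
  simp only [weight, prod_factorial_outdeg_graft, card_aut_graft, Finset.prod_div_distrib,
    Nat.cast_mul, Nat.cast_prod, mul_div_mul_comm]

theorem exists_iso_graft (R : FinRootedTree.{u}) :
    ∃ (I : Type u) (_ : Fintype I) (A : I → FinRootedTree.{u}), Nonempty (Iso R (graft A)) := by
  obtain ⟨ρ, φ, hφ⟩ := exists_graftGraph_components_iso R.root R.isTree
  let A (c : (R.graph.induce {v | v ≠ R.root}).ConnectedComponent) : FinRootedTree.{u} :=
    { V := c
      fintypeV := Fintype.ofFinite _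
      graph := c.toSimpleGraph
      isTree := (R.isTree.isAcyclic.induce _).isTree_connectedComponent c
      root := ρ c }
  exact ⟨_, Fintype.ofFinite _, A, ⟨Iso.symm ⟨φ, hφ⟩⟩⟩

theorem exists_iso_graft_fin (R : FinRootedTree.{0}) :
    ∃ (k : ℕ) (A : Fin k → FinRootedTree), Nonempty (Iso R (graft A)) := by
  obtain ⟨I, _, A, ⟨φ⟩⟩ := R.exists_iso_graft
  let e := Fintype.equivFin I
  exact ⟨_, A ∘ e.symm, ⟨φ.trans (graftIso e fun i => by
    rw [Function.comp_apply, e.symm_apply_apply]; exact .refl _)⟩⟩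

end Graft

end FinRootedTree

/-! ### Pólya trees -/

namespace RTree

variable {n : ℕ}

/-- The rooted tree underlying a labeled tree. -/
def toFinRootedTree (T : RTree n) : FinRootedTree.{0} where
  V := Fin n
  graph := T.graph
  isTree := T.isTree
  root := T.root

theorem outdeg_toFinRootedTree (T : RTree n) (v : Fin n) :
    T.toFinRootedTree.outdeg v = T.outdeg v := by
  unfold FinRootedTree.outdeg RTree.outdeg
  congr

theorem isom_iff_nonempty_iso {T₁ T₂ : RTree n} :
    T₁.Isom T₂ ↔ Nonempty (T₁.toFinRootedTree.Iso T₂.toFinRootedTree) :=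
  nonempty_subtype.symm

theorem isom_equivalence_s17 : Equivalence (Isom (n := n)) where
  refl _ := isom_iff_nonempty_iso.2 ⟨.refl _⟩
  symm h := isom_iff_nonempty_iso.2 ((isom_iff_nonempty_iso.1 h).map .symm)
  trans h h' := isom_iff_nonempty_iso.2
    (Nonempty.map2 .trans (isom_iff_nonempty_iso.1 h) (isom_iff_nonempty_iso.1 h'))

theorem exists_iso_toFinRootedTree (R : FinRootedTree.{0}) :
    ∃ T : RTree (Fintype.card R.V), Nonempty (R.Iso T.toFinRootedTree) := by
  let e := Fintype.equivFin R.V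
  let φ : R.graph ≃g R.graph.map e := SimpleGraph.Iso.map e R.graph
  exact ⟨⟨R.graph.map e, φ.isTree_iff.1 R.isTree, e R.root⟩, ⟨φ, rfl⟩⟩

end RTree

namespace UBTree

variable {n : ℕ}

theorem exists_iso_toFinRootedTree {R : FinRootedTree.{0}} (hR : ∀ v, R.outdeg v ≤ 2) :
    ∃ T : UBTree (Fintype.card R.V), Nonempty (R.Iso T.1.toFinRootedTree) := by
  obtain ⟨T, ⟨φ⟩⟩ := RTree.exists_iso_toFinRootedTree R
  refine ⟨⟨T, fun v => ?_⟩, ⟨φ⟩⟩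
  obtain ⟨w, rfl⟩ := φ.1.surjective v
  exact (T.outdeg_toFinRootedTree _).symm.trans_le ((φ.outdeg_eq w).trans_le (hR w))

open Nat in
theorem weight_toFinRootedTree (T : UBTree n) :
    T.1.toFinRootedTree.weight = 2 ^ binCount T / T.1.autCard := by
  have hfactorial (v : Fin n) : (T.1.outdeg v)! = if T.1.outdeg v = 2 then 2 else 1 := by
    have := T.2 v
    interval_cases T.1.outdeg v <;> rfl
  have hprod : ∏ v : Fin n, (T.1.toFinRootedTree.outdeg v)! = 2 ^ binCount T := by
    simp only [RTree.outdeg_toFinRootedTree, hfactorial]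
    rw [binCount, Finset.prod_ite, Finset.prod_const, Finset.prod_const_one, mul_one]
  rw [FinRootedTree.weight]
  change ((∏ v : Fin n, (T.1.toFinRootedTree.outdeg v)! : ℕ) : ℝ) / _ = _
  rw [hprod, Nat.cast_pow, Nat.cast_ofNat]
  rfl

end UBTree

/-- Unary-binary Pólya trees of arbitrary size; the size of a tree is its first component. -/
abbrev UBPolyaTree : Type := Σ n, PolyaUB n

namespace UBPolyaTree

open FinRootedTree

theorem finite_preimage_size (n : ℕ) : ((Sigma.fst : UBPolyaTree → ℕ) ⁻¹' {n}).Finite := by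
  rw [← Set.range_sigmaMk]
  exact Set.finite_range _

/-- A chosen labeled representative of the isomorphism class. -/
noncomputable def repUBTree (q : UBPolyaTree) : UBTree q.1 := Quot.out q.2

/-- A chosen rooted tree in the isomorphism class. -/
noncomputable def rep (q : UBPolyaTree) : FinRootedTree.{0} := q.repUBTree.1.toFinRootedTree

theorem card_rep (q : UBPolyaTree) : Fintype.card q.rep.V = q.1 :=
  Fintype.card_fin q.1

theorem outdeg_rep_le (q : UBPolyaTree) (v : q.rep.V) : q.rep.outdeg v ≤ 2 :=
  (q.repUBTree.1.outdeg_toFinRootedTree v).trans_le (q.repUBTree.2 v)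

theorem nonempty_iso_rep_iff {q q' : UBPolyaTree} : Nonempty (q.rep.Iso q'.rep) ↔ q = q' := by
  refine ⟨fun hiso => ?_, fun h => h ▸ ⟨.refl _⟩⟩
  have hcard : q.1 = q'.1 := by
    rw [← card_rep, ← card_rep, Fintype.card_congr hiso.some.1.toEquiv]
  obtain ⟨n, q⟩ := q
  obtain ⟨_, q'⟩ := q'
  subst hcard
  have hmk : Quot.mk (fun T₁ T₂ : UBTree n => T₁.1.Isom T₂.1) q.out = Quot.mk _ q'.out :=
    Quot.sound (RTree.isom_iff_nonempty_iso.2 hiso)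
  exact congrArg (Sigma.mk n) ((Quot.out_eq q).symm.trans (hmk.trans (Quot.out_eq q')))

theorem exists_iso_rep {R : FinRootedTree.{0}} (hR : ∀ v, R.outdeg v ≤ 2) :
    ∃ q : UBPolyaTree, Nonempty (R.Iso q.rep) := by
  obtain ⟨T, ⟨φ⟩⟩ := UBTree.exists_iso_toFinRootedTree hR
  refine ⟨⟨_, Quot.mk _ T⟩, ?_⟩
  have hout : T.1.Isom (Quot.out (Quot.mk (fun T₁ T₂ : UBTree _ => T₁.1.Isom T₂.1) T)).1 :=
    (RTree.isom_equivalence_s17.comap Subtype.val).eqvGen_iff.1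
      (Quot.eqvGen_exact (Quot.out_eq _).symm)
  exact (RTree.isom_iff_nonempty_iso.1 hout).map φ.trans

/-- The number of plane representations of a Pólya tree. -/
noncomputable def weight (q : UBPolyaTree) : ℝ := q.rep.weight

theorem weight_pos (q : UBPolyaTree) : 0 < q.weight := q.rep.weight_pos

variable {k l : ℕ}

theorem exists_iso_graft_rep (hk : k ≤ 2) (x : Fin k → UBPolyaTree) :
    ∃ q : UBPolyaTree, Nonempty ((graft fun i => (x i).rep).Iso q.rep) :=
  exists_iso_rep <| (forall_outdeg_graft_le_iff _).2
    ⟨(Fintype.card_fin k).trans_le hk, fun i => outdeg_rep_le (x i)⟩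

/-- The Pólya tree whose root branches are the `x i`. -/
noncomputable def node (hk : k ≤ 2) (x : Fin k → UBPolyaTree) : UBPolyaTree :=
  (exists_iso_graft_rep hk x).choose

theorem nonempty_iso_rep_node (hk : k ≤ 2) (x : Fin k → UBPolyaTree) :
    Nonempty ((graft fun i => (x i).rep).Iso (node hk x).rep) :=
  (exists_iso_graft_rep hk x).choose_spec

theorem node_eq_node_iff {hk : k ≤ 2} {hl : l ≤ 2} {x : Fin k → UBPolyaTree}
    {y : Fin l → UBPolyaTree} :
    node hk x = node hl y ↔ ∃ σ : Fin k ≃ Fin l, ∀ i, x i = y (σ i) := by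
  obtain ⟨φ⟩ := nonempty_iso_rep_node hk x
  obtain ⟨φ'⟩ := nonempty_iso_rep_node hl y
  simp only [← nonempty_iso_rep_iff]
  constructor
  · rintro ⟨χ⟩
    obtain ⟨σ, ψ, -⟩ := exists_graftIso_eq (φ.trans (χ.trans φ'.symm))
    exact ⟨σ, fun i => ⟨ψ i⟩⟩
  · rintro ⟨σ, hσ⟩
    exact ⟨φ.symm.trans ((graftIso σ fun i => (hσ i).some).trans φ')⟩

theorem exists_node_eq (q : UBPolyaTree) :
    ∃ (k : ℕ) (hk : k ≤ 2) (x : Fin k → UBPolyaTree), node hk x = q := by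
  obtain ⟨k, A, ⟨φ⟩⟩ := q.rep.exists_iso_graft_fin
  have hA : ∀ v, (graft A).outdeg v ≤ 2 := fun v => by
    obtain ⟨v, rfl⟩ := φ.1.surjective v
    exact (φ.outdeg_eq v).trans_le (q.outdeg_rep_le v)
  obtain ⟨hk, hbranch⟩ := (forall_outdeg_graft_le_iff A).1 hA
  rw [Fintype.card_fin] at hk
  choose x ψ using fun i => exists_iso_rep (hbranch i)
  refine ⟨k, hk, x, nonempty_iso_rep_iff.1 ?_⟩
  obtain ⟨χ⟩ := nonempty_iso_rep_node hk x
  exact ⟨χ.symm.trans ((graftIso (.refl _) fun i => (ψ i).some).symm.trans φ.symm)⟩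

theorem size_node (hk : k ≤ 2) (x : Fin k → UBPolyaTree) :
    (node hk x).1 = (∑ i, (x i).1) + 1 := by
  obtain ⟨φ⟩ := nonempty_iso_rep_node hk x
  rw [← card_rep, ← Fintype.card_congr φ.1.toEquiv, card_graft]
  simp only [card_rep]

theorem weight_node (hk : k ≤ 2) (x : Fin k → UBPolyaTree) :
    (node hk x).weight =
      k.factorial / Nat.card {σ : Equiv.Perm (Fin k) // ∀ i, x i = x (σ i)} *
        ∏ i, (x i).weight := by
  obtain ⟨φ⟩ := nonempty_iso_rep_node hk x
  rw [weight, ← φ.weight_eq, weight_graft, Fintype.card_fin]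
  simp only [nonempty_iso_rep_iff, weight]

theorem weight_node_of_forall_eq (hk : k ≤ 2) {x : Fin k → UBPolyaTree}
    (hx : ∀ i j, x i = x j) :
    (node hk x).weight = ∏ i, (x i).weight := by
  have hstab : Nat.card {σ : Equiv.Perm (Fin k) // ∀ i, x i = x (σ i)} = k.factorial := by
    have hall (σ : Equiv.Perm (Fin k)) (i : Fin k) : x i = x (σ i) := hx i (σ i)
    rw [Nat.card_congr (Equiv.subtypeUnivEquiv hall), Nat.card_perm, Nat.card_fin]
  rw [weight_node, hstab, div_self (Nat.cast_ne_zero.2 k.factorial_ne_zero), one_mul]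

theorem weight_node_of_injective (hk : k ≤ 2) {x : Fin k → UBPolyaTree}
    (hx : Function.Injective x) :
    (node hk x).weight = k.factorial * ∏ i, (x i).weight := by
  have hstab : Nat.card {σ : Equiv.Perm (Fin k) // ∀ i, x i = x (σ i)} = 1 := by
    refine Nat.card_eq_one_iff_exists.2 ⟨⟨1, fun _ => rfl⟩, fun σ => Subtype.ext ?_⟩
    exact Equiv.ext fun i => (hx (σ.2 i)).symm
  rw [weight_node, hstab, Nat.cast_one, div_one]

theorem arity_eq_of_node_eq_node {hk : k ≤ 2} {hl : l ≤ 2} {x : Fin k → UBPolyaTree}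
    {y : Fin l → UBPolyaTree} (h : node hk x = node hl y) : k = l :=
  let ⟨σ, _⟩ := node_eq_node_iff.1 h
  Fin.equiv_iff_eq.1 ⟨σ⟩

theorem node_pair_eq_node_pair_iff {a b c d : UBPolyaTree} :
    node le_rfl ![a, b] = node le_rfl ![c, d] ↔ s(a, b) = s(c, d) := by
  rw [node_eq_node_iff, Sym2.eq_iff]
  constructor
  · rintro ⟨σ, hσ⟩
    have hperm : ∀ τ : Equiv.Perm (Fin 2), τ = 1 ∨ τ = .swap 0 1 := by decide
    obtain rfl | rfl := hperm σ
    · exact .inl ⟨hσ 0, hσ 1⟩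
    · exact .inr ⟨hσ 0, hσ 1⟩
  · rintro (⟨rfl, rfl⟩ | ⟨rfl, rfl⟩)
    · exact ⟨.refl _, fun _ => rfl⟩
    · exact ⟨.swap 0 1, Fin.forall_fin_two.2 ⟨rfl, rfl⟩⟩

/-- The Pólya tree with a single vertex. -/
noncomputable def leaf : UBPolyaTree := node zero_le_two ![]

/-- The Pólya tree with the single root branch `q`. -/
noncomputable def unaryNode (q : UBPolyaTree) : UBPolyaTree := node one_le_two ![q]

/-- The Pólya tree whose two root branches form the given unordered pair. -/
noncomputable def binaryNode : Sym2 UBPolyaTree → UBPolyaTree :=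
  Sym2.lift ⟨fun a b => node le_rfl ![a, b], fun _ _ => node_pair_eq_node_pair_iff.2 Sym2.eq_swap⟩

theorem unaryNode_injective : Function.Injective unaryNode := fun _ _ h =>
  let ⟨σ, hσ⟩ := node_eq_node_iff.1 h
  (hσ 0).trans (by rw [Subsingleton.elim (σ 0) 0]; rfl)

theorem binaryNode_injective : Function.Injective binaryNode := by
  rintro ⟨a, b⟩ ⟨c, d⟩ h
  exact node_pair_eq_node_pair_iff.1 h

theorem bijective_sumElim_leaf_unaryNode_binaryNode : Function.Bijective
    (Sum.elim (fun _ : Unit => leaf) (Sum.elim unaryNode binaryNode)) := by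
  refine ⟨?_, fun q => ?_⟩
  · refine .sumElim (fun _ _ _ => rfl) (unaryNode_injective.sumElim binaryNode_injective ?_) ?_
    · rintro q ⟨a, b⟩ h
      exact absurd (arity_eq_of_node_eq_node (hl := le_rfl) h) (by decide)
    · rintro - (q | ⟨a, b⟩) h
      · exact absurd (arity_eq_of_node_eq_node (hl := one_le_two) h) (by decide)
      · exact absurd (arity_eq_of_node_eq_node (hl := le_rfl) h) (by decide)
  · obtain ⟨k, hk, x, rfl⟩ := exists_node_eq q
    interval_cases k
    · exact ⟨.inl (), congrArg (node _) (Subsingleton.elim _ _)⟩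
    · exact ⟨.inr (.inl (x 0)), congrArg (node _) (funext (Fin.forall_fin_one.2 rfl))⟩
    · exact ⟨.inr (.inr s(x 0, x 1)),
        congrArg (node _) (funext (Fin.forall_fin_two.2 ⟨rfl, rfl⟩))⟩

/-- The decomposition of Pólya trees by the branches at the root. -/
noncomputable def nodeEquiv : Unit ⊕ (UBPolyaTree ⊕ Sym2 UBPolyaTree) ≃ UBPolyaTree :=
  .ofBijective _ bijective_sumElim_leaf_unaryNode_binaryNode

theorem size_leaf : leaf.1 = 1 := size_node _ _

theorem size_unaryNode (q : UBPolyaTree) : (unaryNode q).1 = q.1 + 1 := by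
  rw [unaryNode, size_node, Fin.sum_univ_one]
  rfl

theorem size_binaryNode (a b : UBPolyaTree) : (binaryNode s(a, b)).1 = a.1 + b.1 + 1 := by
  rw [binaryNode, Sym2.lift_mk, size_node, Fin.sum_univ_two]
  rfl

theorem weight_leaf : leaf.weight = 1 := by
  rw [leaf, weight_node_of_forall_eq _ fun i => i.elim0, Fin.prod_univ_zero]

theorem weight_unaryNode (q : UBPolyaTree) : (unaryNode q).weight = q.weight := by
  rw [unaryNode, weight_node_of_forall_eq _ fun i j => congrArg _ (Subsingleton.elim i j),
    Fin.prod_univ_one]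
  rfl

theorem weight_binaryNode_self (a : UBPolyaTree) :
    (binaryNode s(a, a)).weight = a.weight * a.weight := by
  rw [binaryNode, Sym2.lift_mk, weight_node_of_forall_eq, Fin.prod_univ_two]
  · rfl
  · simp [Fin.forall_fin_two]

theorem weight_binaryNode_of_ne {a b : UBPolyaTree} (hab : a ≠ b) :
    (binaryNode s(a, b)).weight = 2 * (a.weight * b.weight) := by
  have hinj : Function.Injective ![a, b] := by
    simp [Function.Injective, Fin.forall_fin_two, hab, hab.symm]
  rw [binaryNode, Sym2.lift_mk, weight_node_of_injective _ hinj, Fin.prod_univ_two,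
    Nat.factorial_two, Nat.cast_ofNat]
  rfl

/-- The generating function of unary-binary Pólya trees weighted by the `t`-th power of their
weight, written `P_{0,1,2}(x, t)` in the literature. -/
noncomputable def weightGenFun (t : ℝ) : PowerSeries ℝ :=
  sizeGenFun Sigma.fst fun q : UBPolyaTree => q.weight ^ t

open PowerSeries

theorem weight_binaryNode_self_rpow (a : UBPolyaTree) (t : ℝ) :
    (binaryNode s(a, a)).weight ^ t =
      2 ^ (t - 1) * (a.weight ^ t * a.weight ^ t) + (1 - 2 ^ (t - 1)) * a.weight ^ (2 * t) := by
  have ha := a.weight_pos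
  rw [weight_binaryNode_self, Real.mul_rpow ha.le ha.le, two_mul, Real.rpow_add ha]
  ring

theorem weight_binaryNode_rpow_of_ne {a b : UBPolyaTree} (hab : a ≠ b) (t : ℝ) :
    (binaryNode s(a, b)).weight ^ t =
      2 ^ (t - 1) * (a.weight ^ t * b.weight ^ t) +
        2 ^ (t - 1) * (b.weight ^ t * a.weight ^ t) := by
  have ha := a.weight_pos.le
  have hb := b.weight_pos.le
  have two_rpow : (2 : ℝ) ^ t = 2 * 2 ^ (t - 1) := by
    rw [Real.rpow_sub_one two_ne_zero, mul_div_cancel₀ _ two_ne_zero]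
  rw [weight_binaryNode_of_ne hab, Real.mul_rpow zero_le_two (mul_nonneg ha hb),
    Real.mul_rpow ha hb, two_rpow]
  ring

/-- Splitting `2 ^ t` evenly between the two orders of a pair counts `(a, a)` with factor
`2 ^ (t - 1)` instead of `1`; the second summand makes up for the difference. -/
theorem sizeGenFun_binaryNode (t : ℝ) :
    sizeGenFun (Sigma.fst ∘ binaryNode) (fun s => (binaryNode s).weight ^ t) =
      C (2 ^ (t - 1)) * X * weightGenFun t ^ 2 +
        C (1 - 2 ^ (t - 1)) * X * expand 2 two_ne_zero (weightGenFun (2 * t)) := by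
  have size_pair : (Sigma.fst ∘ binaryNode) ∘ Function.uncurry Sym2.mk =
      fun p : UBPolyaTree × UBPolyaTree => p.1.1 + p.2.1 + 1 :=
    funext fun p => size_binaryNode p.1 p.2
  have size_diag : (Sigma.fst ∘ binaryNode) ∘ Sym2.diag = fun a : UBPolyaTree => 2 * a.1 + 1 :=
    funext fun a => (size_binaryNode a a).trans (by rw [two_mul])
  have hpair : sizeGenFun (fun p : UBPolyaTree × UBPolyaTree => p.1.1 + p.2.1)
      (fun p => p.1.weight ^ t * p.2.weight ^ t) = weightGenFun t ^ 2 := by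
    rw [sq]
    exact sizeGenFun_prod finite_preimage_size finite_preimage_size (weight · ^ t) (weight · ^ t)
  rw [sizeGenFun_sym2 (finite_preimage_comp binaryNode_injective finite_preimage_size)
      (fun a b hab => weight_binaryNode_rpow_of_ne hab t)
      (p := fun p => 2 ^ (t - 1) * (p.1.weight ^ t * p.2.weight ^ t))
      (fun a => weight_binaryNode_self_rpow a t),
    size_pair, size_diag, sizeGenFun_add_one, sizeGenFun_add_one,
    sizeGenFun_const_mul (finite_preimage_add finite_preimage_size finite_preimage_size), hpair,
    sizeGenFun_mul_left two_ne_zero, sizeGenFun_const_mul finite_preimage_size, ← weightGenFun,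
    map_mul, expand_C]
  ring

theorem weightGenFun_eq (t : ℝ) :
    weightGenFun t = X + X * weightGenFun t + C (2 ^ (t - 1)) * X * weightGenFun t ^ 2 +
      C (1 - 2 ^ (t - 1)) * X * expand 2 two_ne_zero (weightGenFun (2 * t)) := by
  have hsize := finite_preimage_comp nodeEquiv.injective finite_preimage_size
  have hleaf : sizeGenFun (fun _ : Unit => leaf.1) (fun _ => leaf.weight ^ t) = X := by
    rw [sizeGenFun_unit, size_leaf, weight_leaf, Real.one_rpow, X_eq]
  have hunary : sizeGenFun (fun q => (unaryNode q).1) (fun q => (unaryNode q).weight ^ t) =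
      X * weightGenFun t := by
    simp only [size_unaryNode, weight_unaryNode, sizeGenFun_add_one, weightGenFun]
  calc weightGenFun t
    _ = sizeGenFun (Sigma.fst ∘ nodeEquiv) ((fun q => q.weight ^ t) ∘ nodeEquiv) :=
      (sizeGenFun_comp_equiv nodeEquiv _ _).symm
    _ = sizeGenFun (fun _ : Unit => leaf.1) (fun _ => leaf.weight ^ t) +
        (sizeGenFun (fun q => (unaryNode q).1) (fun q => (unaryNode q).weight ^ t) +
          sizeGenFun (Sigma.fst ∘ binaryNode) (fun s => (binaryNode s).weight ^ t)) := by
      rw [sizeGenFun_sum hsize, sizeGenFun_sum (finite_preimage_comp Sum.inr_injective hsize)]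
      rfl
    _ = _ := by rw [hleaf, hunary, sizeGenFun_binaryNode, add_assoc, add_assoc]

theorem coeff_weightGenFun (t : ℝ) (n : ℕ) :
    coeff n (weightGenFun t) =
      if n = 0 then 0 else ∑ q : PolyaUB n, weight ⟨n, q⟩ ^ t := by
  rw [weightGenFun, coeff_sizeGenFun_sigma]
  split_ifs with hn
  · subst hn
    have : IsEmpty (PolyaUB 0) := ⟨fun q => q.out.1.root.elim0⟩
    exact Fintype.sum_empty _
  · rfl

end UBPolyaTree

/-- Let `u t` be the power series whose `n`-th coefficient,
for `n ≥ 1`, is `∑ (2^{b(T)}/|Aut(T)|)^t` over the isomorphism classes of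
unary-binary rooted labeled trees on `n` vertices, where `b(T)` is the number
of vertices of out-degree `2` (and whose constant coefficient is `0`).  Then
for every real `t`,
`u_t = X + X·u_t + 2^{t−1}·X·u_t² + (1 − 2^{t−1})·X·u_{2t}(X²)`. -/
theorem unary_binary_functional_equation
    (W : ∀ n : ℕ, PolyaUB n → ℝ)
    (hW : ∀ (n : ℕ) (T : UBTree n),
      W n (Quot.mk _ T) = (2 : ℝ) ^ (binCount T) / (T.1.autCard : ℝ))
    (u : ℝ → PowerSeries ℝ)
    (hu : ∀ (t : ℝ) (n : ℕ),
      PowerSeries.coeff n (u t) =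
        if n = 0 then 0 else ∑ q : PolyaUB n, (W n q) ^ t) :
    ∀ t : ℝ,
      u t =
        PowerSeries.X + PowerSeries.X * u t +
          PowerSeries.C ((2 : ℝ) ^ (t - 1)) * PowerSeries.X * (u t) ^ 2 +
          PowerSeries.C (1 - (2 : ℝ) ^ (t - 1)) * PowerSeries.X *
            subXsq (u (2 * t)) := by
  have hW_eq (n : ℕ) (q : PolyaUB n) : W n q = UBPolyaTree.weight ⟨n, q⟩ := by
    conv_lhs => rw [← Quot.out_eq q, hW, ← UBTree.weight_toFinRootedTree]
    rfl
  have hu_eq (t : ℝ) : u t = UBPolyaTree.weightGenFun t := by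
    ext n
    simp only [hu, UBPolyaTree.coeff_weightGenFun, hW_eq]
  intro t
  rw [hu_eq, hu_eq, subXsq_eq_expand]
  exact UBPolyaTree.weightGenFun_eq t
end
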